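/- For every Q ∈ Ω_E, the infimum d_V(Q) = inf{ L_V(x) : x ∈ X_Q } is attained on at least one curve γ_Q ∈ H¹([0,1],ℝ^N) such that: (E−V(γ_Q)) g(γ̇_Q,γ̇_Q) is constant; γ_Q((0,1]) ⊂ Ω_E and γ_Q is of class C² on (0,1); and γ_Q satisfies ∫_0^1 (E−V(γ_Q)) g(γ̇_Q, Dξ/ds) ds − ½∫_0^1 g(γ̇_Q,γ̇_Q) g(∇V(γ_Q),ξ) ds = 0 for all ξ ∈ C∞_0((0,1),ℝ^N). -/

import Mathlib

open MeasureTheory Set Matrix Filter Topology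

namespace JacobiPaper

noncomputable section

/-- Points/vectors of the ambient space `ℝ^N` in which the manifold `M` is
topologically embedded as an open subset. -/
abbrev Vec (N : ℕ) := Fin N → ℝ

variable {N : ℕ}

/-- The inner product determined by a field of matrices `g` at the point `x`. -/
def gP (g : Vec N → Matrix (Fin N) (Fin N) ℝ) (x v w : Vec N) : ℝ :=
  ∑ i, ∑ j, g x i j * v i * w j

/-- The Euclidean gradient (the differential, as a vector). -/
def euclGrad (V : Vec N → ℝ) (x : Vec N) : Vec N :=
  fun i => fderiv ℝ V x (Pi.single i 1)

/-- The setting of the paper: a `C³` Riemannian metric `g` on a neighborhood `U` of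
the compact sublevel `V⁻¹((-∞,E])`, with `V` of class `C²` there and `E` a regular
value of `V`. -/
structure Setting (N : ℕ) where
  g : Vec N → Matrix (Fin N) (Fin N) ℝ
  V : Vec N → ℝ
  E : ℝ
  U : Set (Vec N)
  hdim : 1 ≤ N
  hU : IsOpen U
  hsub : {x | V x ≤ E} ⊆ U
  hgC : ∀ i j, ContDiffOn ℝ 3 (fun x => g x i j) U
  hgsymm : ∀ x ∈ U, ∀ i j, g x i j = g x j i
  hgpos : ∀ x ∈ U, ∀ v : Vec N, v ≠ 0 → 0 < gP g x v v
  hVC : ContDiffOn ℝ 2 V U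
  hreg : ∀ x, V x = E → euclGrad V x ≠ 0
  hcomp : IsCompact {x : Vec N | V x ≤ E}

namespace Setting

variable (S : Setting N)

/-- The Riemannian inner product `g_x(v,w)`. -/
def prod (x v w : Vec N) : ℝ := gP S.g x v w

/-- The Riemannian norm `‖v‖_x`. -/
def gnorm (x v : Vec N) : ℝ := Real.sqrt (S.prod x v v)

/-- The gradient of `V` with respect to `g`. -/
def grad (x : Vec N) : Vec N := (S.g x)⁻¹ *ᵥ euclGrad S.V x

/-- Christoffel symbols `Γ^k_{ij}` of the Levi-Civita connection of `g`. -/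
def christoffel (x : Vec N) (k i j : Fin N) : ℝ :=
  (1/2) * ∑ l, (S.g x)⁻¹ k l *
    (fderiv ℝ (fun y => S.g y l j) x (Pi.single i 1)
     + fderiv ℝ (fun y => S.g y l i) x (Pi.single j 1)
     - fderiv ℝ (fun y => S.g y i j) x (Pi.single l 1))

/-- Covariant derivative, along the curve `q` with velocity `q'`, of the vector field
`ξ` whose (pointwise) derivative is `ξ'`. -/
def covD (q q' ξ ξ' : ℝ → Vec N) (s : ℝ) : Vec N :=
  fun k => ξ' s k + ∑ i, ∑ j, S.christoffel (q s) k i j * q' s i * ξ s j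

/-- The Riemann curvature tensor `R(u,v)w` of `g` at `x`. -/
def curv (x u v w : Vec N) : Vec N :=
  fun l => ∑ i, ∑ j, ∑ k, u i * v j * w k *
    (fderiv ℝ (fun y => S.christoffel y l j k) x (Pi.single i 1)
     - fderiv ℝ (fun y => S.christoffel y l i k) x (Pi.single j 1)
     + ∑ m, (S.christoffel x l i m * S.christoffel x m j k
             - S.christoffel x l j m * S.christoffel x m i k))

/-- The Hessian operator of `V` with respect to `g`: `ξ ↦ ∇_ξ ∇V`. -/
def hessV (x ξ : Vec N) : Vec N :=
  fun k => ∑ i, ξ i * (fderiv ℝ (fun y => S.grad y k) x (Pi.single i 1)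
    + ∑ j, S.christoffel x k i j * S.grad x j)

/-- The Jacobi-metric geodesic equation (eq. (2.5) of the paper) at the instant `s`,
for a curve `x` with derivative `x'` and second derivative `x''`. -/
def GeoEqAt (x x' x'' : ℝ → Vec N) (s : ℝ) : Prop :=
  ∀ k, (S.E - S.V (x s)) * S.covD x x' x' x'' s k
    - S.prod (x s) (S.grad (x s)) (x' s) * x' s k
    + (1/2) * S.prod (x s) (x' s) (x' s) * S.grad (x s) k = 0

end Setting

/-- `q` is of class `C²` on `I` with first derivative `q'` and second derivative `q''`. -/
def C2OnWith (q q' q'' : ℝ → Vec N) (I : Set ℝ) : Prop :=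
  (∀ t ∈ I, HasDerivWithinAt q (q' t) I t) ∧
  (∀ t ∈ I, HasDerivWithinAt q' (q'' t) I t) ∧
  ContinuousOn q'' I

/-- `x` belongs to the Sobolev space `H¹([a,b],ℝ^N)`: it is absolutely continuous
(primitive of its a.e. derivative) with square-integrable derivative. -/
def H1On (x : ℝ → Vec N) (a b : ℝ) : Prop :=
  ContinuousOn x (Icc a b) ∧
  IntegrableOn (deriv x) (Icc a b) ∧
  IntegrableOn (fun s => ‖deriv x s‖ ^ 2) (Icc a b) ∧
  ∀ t ∈ Icc a b, x t = x a + ∫ s in a..t, deriv x s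

/-- `x` is absolutely continuous on `[a,b]`. -/
def ACOn (x : ℝ → Vec N) (a b : ℝ) : Prop :=
  ContinuousOn x (Icc a b) ∧
  IntegrableOn (deriv x) (Icc a b) ∧
  ∀ t ∈ Icc a b, x t = x a + ∫ s in a..t, deriv x s

namespace Setting

variable (S : Setting N)

/-- The weak (distributional) form (eq. (2.7)) of the Jacobi geodesic equation on `(a,b)`,
tested against all `ξ ∈ C^∞_0((a,b),ℝ^N)`. -/
def WeakGeo (x : ℝ → Vec N) (a b : ℝ) : Prop :=
  ∀ ξ : ℝ → Vec N, ContDiff ℝ (⊤ : ℕ∞) ξ → tsupport ξ ⊆ Ioo a b →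
    (∫ s in a..b,
      ((S.E - S.V (x s)) * S.prod (x s) (deriv x s) (S.covD x (deriv x) ξ (deriv ξ) s)
        - (1/2) * S.prod (x s) (deriv x s) (deriv x s)
            * S.prod (x s) (S.grad (x s)) (ξ s))) = 0

/-- The space `X_Q`. -/
def InXQ (Q : Vec N) (x : ℝ → Vec N) : Prop :=
  H1On x 0 1 ∧ S.V (x 0) = S.E ∧ (∀ s ∈ Ioc (0:ℝ) 1, S.V (x s) < S.E) ∧ x 1 = Q

/-- The Jacobi length functional `L_V`. -/
def LV (x : ℝ → Vec N) : ℝ :=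
  ∫ s in (0:ℝ)..1,
    Real.sqrt ((1/2) * (S.E - S.V (x s)) * S.prod (x s) (deriv x s) (deriv x s))

/-- The distance `d_V(Q)` from `Q` to the boundary of the potential well. -/
def dV (Q : Vec N) : ℝ := sInf {r | ∃ x, S.InXQ Q x ∧ r = S.LV x}

/-- `γ : [0,a] → M` is a `g_*`-geodesic starting at `V⁻¹(E)`, staying in the potential
well for `s > 0`, parameterized by arc length (`½ g(γ̇,γ̇)(E−V(γ)) ≡ 1`). -/
def IsBdryGeo (γ : ℝ → Vec N) (a : ℝ) : Prop :=
  0 < a ∧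
  ContinuousOn γ (Icc 0 a) ∧
  (∀ s ∈ Ioc (0:ℝ) a, ContDiffAt ℝ 2 γ s) ∧
  S.V (γ 0) = S.E ∧
  (∀ s ∈ Ioc (0:ℝ) a, S.V (γ s) < S.E) ∧
  (∀ s ∈ Ioc (0:ℝ) a, S.GeoEqAt γ (deriv γ) (deriv (deriv γ)) s) ∧
  (∀ s ∈ Ioc (0:ℝ) a, (1/2) * S.prod (γ s) (deriv γ s) (deriv γ s) * (S.E - S.V (γ s)) = 1)

/-- The index form `I_{s₁,s₂}(ξ,η)` along `γ`. -/
def idxForm (γ : ℝ → Vec N) (s₁ s₂ : ℝ) (ξ η : ℝ → Vec N) : ℝ :=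
  ∫ u in s₁..s₂,
    ((S.E - S.V (γ u)) *
        (S.prod (γ u) (S.covD γ (deriv γ) ξ (deriv ξ) u) (S.covD γ (deriv γ) η (deriv η) u)
          + S.prod (γ u) (S.curv (γ u) (deriv γ u) (ξ u) (deriv γ u)) (η u))
      - (S.prod (γ u) (S.grad (γ u)) (ξ u)
            * S.prod (γ u) (deriv γ u) (S.covD γ (deriv γ) η (deriv η) u)
          + S.prod (γ u) (deriv γ u) (S.covD γ (deriv γ) ξ (deriv ξ) u)
            * S.prod (γ u) (S.grad (γ u)) (η u)
          + (1/2) * S.prod (γ u) (S.hessV (γ u) (ξ u)) (η u)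
            * S.prod (γ u) (deriv γ u) (deriv γ u)))

/-- Membership in the space `Y_s^W`: absolutely continuous vector fields along `γ|[0,s]`
with finite weighted norm, with `ξ(0) ∈ T_{γ(0)}V⁻¹(E)` and `ξ(s) = W`. -/
def InY (γ : ℝ → Vec N) (s : ℝ) (W : Vec N) (ξ : ℝ → Vec N) : Prop :=
  ACOn ξ 0 s ∧
  IntegrableOn (fun u => (S.E - S.V (γ u)) *
      S.prod (γ u) (S.covD γ (deriv γ) ξ (deriv ξ) u)
        (S.covD γ (deriv γ) ξ (deriv ξ) u)) (Icc 0 s) ∧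
  S.prod (γ 0) (S.grad (γ 0)) (ξ 0) = 0 ∧
  ξ s = W

/-- The weighted squared norm `⟨ξ,ξ⟩_{0,s}`. -/
def wNormSq (γ : ℝ → Vec N) (s : ℝ) (ξ : ℝ → Vec N) : ℝ :=
  ∫ u in (0:ℝ)..s, (S.E - S.V (γ u)) *
    S.prod (γ u) (S.covD γ (deriv γ) ξ (deriv ξ) u) (S.covD γ (deriv γ) ξ (deriv ξ) u)

/-- The Jacobi field equation (eq. (4.9)) at the instant `u`. -/
def JacobiEqAt (γ ξ : ℝ → Vec N) (u : ℝ) : Prop :=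
  ∀ k, - deriv (fun t => (S.E - S.V (γ t)) * S.covD γ (deriv γ) ξ (deriv ξ) t k) u
      + (S.E - S.V (γ u)) * S.curv (γ u) (deriv γ u) (ξ u) (deriv γ u) k
      + deriv (fun t => S.prod (γ t) (S.grad (γ t)) (ξ t) * deriv γ t k) u
      - S.prod (γ u) (deriv γ u) (S.covD γ (deriv γ) ξ (deriv ξ) u) * S.grad (γ u) k
      - (1/2) * S.prod (γ u) (deriv γ u) (deriv γ u) * S.hessV (γ u) (ξ u) k = 0

/-- `ξ` is a Jacobi field along `γ|[0,s]`: of class `C⁰([0,s]) ∩ C²((0,s])` and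
solving the Jacobi equation on `(0,s]`. -/
def IsJacobi (γ ξ : ℝ → Vec N) (s : ℝ) : Prop :=
  ContinuousOn ξ (Icc 0 s) ∧ (∀ u ∈ Ioc (0:ℝ) s, ContDiffAt ℝ 2 ξ u) ∧
  ∀ u ∈ Ioc (0:ℝ) s, S.JacobiEqAt γ ξ u

/-- The boundary condition (eq. (4.10)): the continuous extension at `s = 0` of
`(E−V(γ))Dξ/ds − g(∇V(γ),ξ)γ̇` is parallel to `∇V(γ(0))`. -/
def BdryCond (γ ξ : ℝ → Vec N) : Prop :=
  ∃ c : ℝ, Tendsto (fun u => (fun k => (S.E - S.V (γ u)) * S.covD γ (deriv γ) ξ (deriv ξ) u k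
      - S.prod (γ u) (S.grad (γ u)) (ξ u) * deriv γ u k))
    (nhdsWithin 0 (Ioi 0)) (nhds (c • S.grad (γ 0)))

end Setting

/-- The family `ξ : Fin n → (ℝ → Vec N)` is linearly independent as fields on `I`. -/
def IndepOn {n : ℕ} (I : Set ℝ) (ξ : Fin n → ℝ → Vec N) : Prop :=
  ∀ c : Fin n → ℝ, (∀ u ∈ I, (∑ i, c i • ξ i) u = 0) → c = 0

/-- The index of the quadratic form `B` on the class `C` of vector fields (regarded as
fields on `I`) is at least `n`. -/
def IndexGe {N : ℕ} (B : (ℝ → Vec N) → ℝ) (C : (ℝ → Vec N) → Prop) (I : Set ℝ) (n : ℕ) : Prop :=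
  ∃ ξ : Fin n → ℝ → Vec N, (∀ i, C (ξ i)) ∧ IndepOn I ξ ∧
    ∀ c : Fin n → ℝ, c ≠ 0 → B (∑ i, c i • ξ i) < 0

/-- The index of the quadratic form `B` on the class `C` equals `n`. -/
def IndexEq {N : ℕ} (B : (ℝ → Vec N) → ℝ) (C : (ℝ → Vec N) → Prop) (I : Set ℝ) (n : ℕ) : Prop :=
  IndexGe B C I n ∧ ¬ IndexGe B C I (n+1)

/-- The nullity of a bilinear form `B` on the class `C` is at least `n`. -/
def NullGe {N : ℕ} (B : (ℝ → Vec N) → (ℝ → Vec N) → ℝ) (C : (ℝ → Vec N) → Prop)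
    (I : Set ℝ) (n : ℕ) : Prop :=
  ∃ ξ : Fin n → ℝ → Vec N, (∀ i, C (ξ i)) ∧ IndepOn I ξ ∧
    ∀ i, ∀ η, C η → B (ξ i) η = 0

/-- The nullity of a bilinear form `B` on the class `C` equals `n`. -/
def NullEq {N : ℕ} (B : (ℝ → Vec N) → (ℝ → Vec N) → ℝ) (C : (ℝ → Vec N) → Prop)
    (I : Set ℝ) (n : ℕ) : Prop :=
  NullGe B C I n ∧ ¬ NullGe B C I (n+1)

namespace Setting

variable (S : Setting N)

/-- `ξ` is a (nontrivial candidate) field realizing conjugacy at `γ(s)`: a Jacobi field in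
`Y_s` satisfying the boundary condition (4.10). -/
def ConjField (γ : ℝ → Vec N) (s : ℝ) (ξ : ℝ → Vec N) : Prop :=
  S.InY γ s 0 ξ ∧ S.IsJacobi γ ξ s ∧ S.BdryCond γ ξ

/-- `γ(s)` is conjugate to `V⁻¹(E)` with multiplicity at least `n`. -/
def MultGe (γ : ℝ → Vec N) (s : ℝ) (n : ℕ) : Prop :=
  ∃ ξ : Fin n → ℝ → Vec N, (∀ i, S.ConjField γ s (ξ i)) ∧ IndepOn (Icc 0 s) ξ

/-- `γ(s)` is conjugate to `V⁻¹(E)`. -/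
def IsConj (γ : ℝ → Vec N) (s : ℝ) : Prop := S.MultGe γ s 1

/-- `γ(s)` is conjugate to `V⁻¹(E)` with multiplicity exactly `n`. -/
def Mult (γ : ℝ → Vec N) (s : ℝ) (n : ℕ) : Prop :=
  S.MultGe γ s n ∧ ¬ S.MultGe γ s (n+1)

end Setting

namespace Setting

variable (S : Setting N)

/-- The quadratic form `½(E−V(x))g_x(v,v)` of the Jacobi metric. -/
def jac (x v : Vec N) : ℝ := (1/2) * (S.E - S.V x) * S.prod x v v

/-- The speed of a curve with respect to the Jacobi metric. -/
def speed (x : ℝ → Vec N) (s : ℝ) : ℝ := Real.sqrt (S.jac (x s) (deriv x s))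

lemma LV_eq (x : ℝ → Vec N) : S.LV x = ∫ s in (0:ℝ)..1, S.speed x s := rfl

lemma speed_nonneg (x : ℝ → Vec N) (s : ℝ) : 0 ≤ S.speed x s := Real.sqrt_nonneg _

lemma mem_U {x : Vec N} (hx : S.V x ≤ S.E) : x ∈ S.U := S.hsub hx

lemma isOpen_well : IsOpen {x | S.V x < S.E} := by
  have e : {x | S.V x < S.E} = S.U ∩ S.V ⁻¹' Iio S.E :=
    Set.ext fun x => ⟨fun hx => ⟨S.mem_U (le_of_lt hx), hx⟩, fun hx => hx.2⟩
  rw [e]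
  exact S.hVC.continuousOn.isOpen_inter_preimage S.hU isOpen_Iio

lemma continuousOn_g (i j : Fin N) : ContinuousOn (fun x => S.g x i j) S.U :=
  (S.hgC i j).continuousOn

lemma continuousOn_prod :
    ContinuousOn (fun p : Vec N × Vec N × Vec N => S.prod p.1 p.2.1 p.2.2) (S.U ×ˢ univ) := by
  unfold prod gP
  refine continuousOn_finsetSum _ fun i _ => continuousOn_finsetSum _ fun j _ => ?_
  refine ContinuousOn.mul (ContinuousOn.mul ?_ ?_) ?_
  · exact (S.continuousOn_g i j).comp continuousOn_fst fun p hp => hp.1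
  · exact (by fun_prop : Continuous fun p : Vec N × Vec N × Vec N => p.2.1 i).continuousOn
  · exact (by fun_prop : Continuous fun p : Vec N × Vec N × Vec N => p.2.2 j).continuousOn

lemma continuousOn_jac :
    ContinuousOn (fun p : Vec N × Vec N => S.jac p.1 p.2) (S.U ×ˢ univ) := by
  unfold jac
  refine ContinuousOn.mul (continuousOn_const.mul (continuousOn_const.sub ?_)) ?_
  · exact S.hVC.continuousOn.comp continuousOn_fst fun p hp => hp.1
  · exact S.continuousOn_prod.comp
      (f := fun p : Vec N × Vec N => (p.1, p.2, p.2)) (by fun_prop) fun p hp => ⟨hp.1, trivial⟩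

lemma prod_add_right (x u v w : Vec N) : S.prod x u (v + w) = S.prod x u v + S.prod x u w := by
  simp only [prod, gP, Pi.add_apply, mul_add, Finset.sum_add_distrib]

lemma prod_smul_right (x u v : Vec N) (c : ℝ) : S.prod x u (c • v) = c * S.prod x u v := by
  simp only [prod, gP, Pi.smul_apply, smul_eq_mul, Finset.mul_sum]
  exact Finset.sum_congr rfl fun i _ => Finset.sum_congr rfl fun j _ => by ring

lemma prod_comm {x : Vec N} (hx : x ∈ S.U) (u v : Vec N) : S.prod x u v = S.prod x v u := by
  simp only [prod, gP]
  rw [Finset.sum_comm]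
  exact Finset.sum_congr rfl fun i _ => Finset.sum_congr rfl fun j _ => by
    rw [S.hgsymm x hx j i]; ring

lemma prod_self_nonneg {x : Vec N} (hx : x ∈ S.U) (v : Vec N) : 0 ≤ S.prod x v v := by
  rcases eq_or_ne v 0 with rfl | hv
  · simp [prod, gP]
  · exact (S.hgpos x hx v hv).le

lemma prod_smul_self (x v : Vec N) (c : ℝ) : S.prod x (c • v) (c • v) = c ^ 2 * S.prod x v v := by
  simp only [prod, gP, Pi.smul_apply, smul_eq_mul, Finset.mul_sum]
  exact Finset.sum_congr rfl fun i _ => Finset.sum_congr rfl fun j _ => by ring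

lemma jac_smul (x v : Vec N) (c : ℝ) : S.jac x (c • v) = c ^ 2 * S.jac x v := by
  rw [jac, jac, prod_smul_self]; ring

lemma jac_nonneg {x : Vec N} (hx : S.V x ≤ S.E) (v : Vec N) : 0 ≤ S.jac x v :=
  mul_nonneg (by linarith) (S.prod_self_nonneg (S.mem_U hx) v)

lemma jac_pos {x : Vec N} (hx : S.V x < S.E) {v : Vec N} (hv : v ≠ 0) : 0 < S.jac x v :=
  mul_pos (by linarith) (S.hgpos x (S.mem_U hx.le) v hv)

/-- Cauchy–Schwarz inequality for the metric `g`. -/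
lemma prod_le_sqrt_mul_sqrt {x : Vec N} (hx : x ∈ S.U) (v w : Vec N) :
    S.prod x v w ≤ Real.sqrt (S.prod x v v) * Real.sqrt (S.prod x w w) := by
  rcases eq_or_ne v 0 with rfl | hv
  · simp [prod, gP]
  rcases eq_or_ne w 0 with rfl | hw
  · simp [prod, gP]
  set a := Real.sqrt (S.prod x v v)
  set b := Real.sqrt (S.prod x w w)
  have ha : 0 < a := Real.sqrt_pos.2 (S.hgpos x hx v hv)
  have hb : 0 < b := Real.sqrt_pos.2 (S.hgpos x hx w hw)
  have ha2 : a ^ 2 = S.prod x v v := Real.sq_sqrt (S.hgpos x hx v hv).le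
  have hb2 : b ^ 2 = S.prod x w w := Real.sq_sqrt (S.hgpos x hx w hw).le
  have h := S.prod_self_nonneg hx (b • v + (-a) • w)
  have e : S.prod x (b • v + (-a) • w) (b • v + (-a) • w)
      = b ^ 2 * S.prod x v v - 2 * a * b * S.prod x v w + a ^ 2 * S.prod x w w := by
    rw [prod_add_right, prod_smul_right, prod_smul_right, S.prod_comm hx _ v, S.prod_comm hx _ w,
      prod_add_right, prod_smul_right, prod_smul_right, prod_add_right, prod_smul_right,
      prod_smul_right, S.prod_comm hx w v]
    ring
  rw [e, ← ha2, ← hb2] at h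
  have : 0 ≤ (2 * (a * b)) * (a * b - S.prod x v w) := by nlinarith
  have := nonneg_of_mul_nonneg_right this (by positivity)
  linarith

/-- On the compact sublevel, `g` is uniformly equivalent to the ambient norm. -/
lemma exists_prod_bounds : ∃ l > 0, ∃ L > 0, ∀ x, S.V x ≤ S.E → ∀ v : Vec N,
    l * ‖v‖ ^ 2 ≤ S.prod x v v ∧ S.prod x v v ≤ L * ‖v‖ ^ 2 := by
  have hK : IsCompact ({x : Vec N | S.V x ≤ S.E} ×ˢ Metric.sphere (0 : Vec N) 1) :=
    S.hcomp.prod (isCompact_sphere _ _)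
  have hc : ContinuousOn (fun p : Vec N × Vec N => S.prod p.1 p.2 p.2)
      ({x : Vec N | S.V x ≤ S.E} ×ˢ Metric.sphere (0 : Vec N) 1) :=
    S.continuousOn_prod.comp
      (f := fun p : Vec N × Vec N => (p.1, p.2, p.2)) (by fun_prop)
        fun p hp => ⟨S.mem_U hp.1, trivial⟩
  obtain ⟨l, hl, hl'⟩ := hK.exists_forall_le' hc (a := 0) fun p hp =>
    S.hgpos p.1 (S.mem_U hp.1) p.2 (by
      have := hp.2
      rintro h
      simp [h] at this)
  obtain ⟨L, hL⟩ := (hK.bddAbove_image hc)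
  refine ⟨l, hl, max L 1, by positivity, fun x hx v => ?_⟩
  rcases eq_or_ne v 0 with rfl | hv
  · simp [prod, gP]
  have hv' : 0 < ‖v‖ := norm_pos_iff.2 hv
  have hmem : (x, ‖v‖⁻¹ • v) ∈ {x : Vec N | S.V x ≤ S.E} ×ˢ Metric.sphere (0 : Vec N) 1 := by
    refine ⟨hx, ?_⟩
    simp [norm_smul, hv'.ne']
  have e : S.prod x v v = ‖v‖ ^ 2 * S.prod x (‖v‖⁻¹ • v) (‖v‖⁻¹ • v) := by
    rw [prod_smul_self]; field_simp
  have h1 := hl' _ hmem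
  have h2 : S.prod x (‖v‖⁻¹ • v) (‖v‖⁻¹ • v) ≤ L := hL ⟨_, hmem, rfl⟩
  rw [e]
  constructor
  · rw [mul_comm]; gcongr
  · rw [mul_comm]; gcongr; exact h2.trans (le_max_left _ _)

end Setting

namespace Setting

variable (S : Setting N)

/-- A ray issuing from a point of the well reaches the boundary of the well. -/
lemma exists_first_exit {p : Vec N} (hp : S.V p < S.E) {v : Vec N} (hv : v ≠ 0) :
    ∃ T > 0, S.V (p + T • v) = S.E ∧ ∀ t ∈ Ico (0:ℝ) T, S.V (p + t • v) < S.E := by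
  have hcont : Continuous fun t : ℝ => p + t • v := by fun_prop
  set A : Set ℝ := Ici 0 ∩ {t | S.V (p + t • v) < S.E}ᶜ with hA
  have hAc : IsClosed A :=
    isClosed_Ici.inter (S.isOpen_well.preimage hcont).isClosed_compl
  have hAne : A.Nonempty := by
    obtain ⟨R, hR⟩ := S.hcomp.isBounded.exists_norm_le
    have hv' : 0 < ‖v‖ := norm_pos_iff.2 hv
    have hR0 : 0 ≤ R := (norm_nonneg _).trans (hR p hp.le)
    refine ⟨(R + ‖p‖ + 1) / ‖v‖, mem_Ici.2 (by positivity), fun h => ?_⟩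
    have h0 : S.V (p + ((R + ‖p‖ + 1) / ‖v‖) • v) < S.E := h
    have h1 := hR _ h0.le
    have h2 : ‖((R + ‖p‖ + 1) / ‖v‖) • v‖ = R + ‖p‖ + 1 := by
      rw [norm_smul, Real.norm_of_nonneg (by positivity)]; field_simp
    have h3 := norm_le_add_norm_add ((((R + ‖p‖ + 1) / ‖v‖)) • v) p
    rw [h2, add_comm (_ • v) p] at h3
    linarith
  have hAb : BddBelow A := ⟨0, fun t ht => ht.1⟩
  set T := sInf A
  have hT : T ∈ A := hAc.csInf_mem hAne hAb
  have hlt : ∀ t ∈ Ico (0:ℝ) T, S.V (p + t • v) < S.E := by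
    intro t ht
    by_contra h
    exact absurd (csInf_le hAb ⟨ht.1, h⟩) (not_le.2 ht.2)
  have hT0 : 0 < T := by
    refine lt_of_le_of_ne hT.1 fun h => hT.2 ?_
    simp only [mem_ofPred_eq, ← h, zero_smul, add_zero]
    exact hp
  refine ⟨T, hT0, le_antisymm ?_ (not_lt.1 hT.2), hlt⟩
  have hm : MapsTo (fun t : ℝ => p + t • v) (Ico 0 T) {x | S.V x ≤ S.E} :=
    fun t ht => (hlt t ht).le
  have := hm.closure hcont
  rw [closure_Ico hT0.ne, S.hcomp.isClosed.closure_eq] at this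
  exact this ⟨hT0.le, le_rfl⟩

lemma fderiv_apply_eq_sum {f : Vec N → ℝ} (x y : Vec N) :
    fderiv ℝ f x y = ∑ j, y j * fderiv ℝ f x (Pi.single j 1) := by
  conv_lhs => rw [pi_eq_sum_univ' y]
  simp only [map_sum, map_smul, smul_eq_mul]

lemma fderiv_apply_eq (x v : Vec N) :
    fderiv ℝ S.V x v = ∑ i, v i * euclGrad S.V x i :=
  fderiv_apply_eq_sum x v

lemma differentiableAt_V {x : Vec N} (hx : x ∈ S.U) : DifferentiableAt ℝ S.V x :=
  (S.hVC.differentiableOn (by norm_num)).differentiableAt (S.hU.mem_nhds hx)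

lemma differentiableAt_g {x : Vec N} (hx : x ∈ S.U) (i j : Fin N) :
    DifferentiableAt ℝ (fun y => S.g y i j) x :=
  ((S.hgC i j).differentiableOn (by norm_num)).differentiableAt (S.hU.mem_nhds hx)

lemma continuousOn_fderiv_V : ContinuousOn (fderiv ℝ S.V) S.U :=
  S.hVC.continuousOn_fderiv_of_isOpen S.hU (by norm_num)

lemma continuousOn_euclGrad : ContinuousOn (euclGrad S.V) S.U :=
  continuousOn_pi.2 fun _ => S.continuousOn_fderiv_V.clm_apply continuousOn_const

/-- Near the boundary of the well, the differential of `V` is uniformly positive in the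
direction of the Euclidean gradient. -/
lemma exists_fderiv_lower_bound : ∃ m > 0, ∀ p q, S.V p ≤ S.E → S.V q ≤ S.E →
    S.E - S.V p < m → dist p q < m → m ≤ fderiv ℝ S.V q (euclGrad S.V p) := by
  set K := {x : Vec N | S.V x ≤ S.E}
  have hfst : ContinuousOn (fun z : Vec N × Vec N => z.1) (K ×ˢ K) := continuousOn_fst
  have hF : ContinuousOn (fun z : Vec N × Vec N => fderiv ℝ S.V z.2 (euclGrad S.V z.1))
      (K ×ˢ K) :=
    (S.continuousOn_fderiv_V.comp continuousOn_snd fun z hz => S.hsub hz.2).clm_apply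
      (S.continuousOn_euclGrad.comp continuousOn_fst fun z hz => S.hsub hz.1)
  have hV : ContinuousOn (fun z : Vec N × Vec N => S.E - S.V z.1) (K ×ˢ K) :=
    continuousOn_const.sub
      (S.hVC.continuousOn.comp continuousOn_fst fun z hz => S.hsub hz.1)
  have hd : ContinuousOn (fun z : Vec N × Vec N => dist z.1 z.2) (K ×ˢ K) := by fun_prop
  obtain ⟨m, hm, h⟩ := (S.hcomp.prod S.hcomp).exists_forall_le' (hF.sup (hV.sup hd)) (a := 0) (by
    rintro ⟨p, q⟩ ⟨hp, hq⟩
    by_contra hle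
    simp only [sup_le_iff, not_lt] at hle
    obtain ⟨h1, h2, h3⟩ := hle
    have hpE : S.V p = S.E := le_antisymm hp (by linarith)
    have hpq : p = q := dist_le_zero.1 h3
    rw [← hpq, fderiv_apply_eq] at h1
    refine S.hreg p hpE (funext fun i => ?_)
    have h0 := (Finset.sum_eq_zero_iff_of_nonneg
      (fun i _ => mul_self_nonneg (euclGrad S.V p i))).1
        (le_antisymm h1 (Finset.sum_nonneg fun i _ => mul_self_nonneg _)) i (Finset.mem_univ i)
    exact mul_self_eq_zero.1 h0)
  refine ⟨m, hm, fun p q hp hq h1 h2 => ?_⟩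
  have := h (p, q) ⟨hp, hq⟩
  rcases le_sup_iff.1 this with h3 | h3
  · exact h3
  rcases le_sup_iff.1 h3 with h3 | h3
  · exact absurd h1 (not_lt.2 h3)
  · exact absurd h2 (not_lt.2 h3)

/-- Points of the well close to its boundary can be joined to the boundary by a short segment
along which the potential is larger than at the starting point. -/
lemma exists_collar : ∃ C > 0, ∃ d > 0, ∀ p, S.V p < S.E → S.E - S.V p < d →
    ∃ p', S.V p' = S.E ∧ ‖p - p'‖ ≤ C * (S.E - S.V p) ∧
      ∀ θ ∈ Ioc (0:ℝ) 1, S.V (p' + θ • (p - p')) < S.E ∧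
        S.E - S.V (p' + θ • (p - p')) ≤ S.E - S.V p := by
  obtain ⟨m, hm, hF⟩ := S.exists_fderiv_lower_bound
  obtain ⟨B, hB⟩ := (S.hcomp.image_of_continuousOn
    (S.continuousOn_euclGrad.mono S.hsub)).isBounded.exists_norm_le
  set b := max B 1
  have hb : 0 < b := by positivity
  refine ⟨b / m, by positivity, min m (m * (m / (2 * b))), by positivity, fun p hp hpd => ?_⟩
  have hpm : S.E - S.V p < m := hpd.trans_le (min_le_left _ _)
  set v := euclGrad S.V p with hv_def
  have hvb : ‖v‖ ≤ b := (hB _ ⟨p, hp.le, rfl⟩).trans (le_max_left _ _)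
  have hv : v ≠ 0 := by
    intro h0
    have := hF p p hp.le hp.le hpm (by simpa using hm)
    rw [← hv_def, h0, map_zero] at this
    linarith
  obtain ⟨T, hT, hTE, hTlt⟩ := S.exists_first_exit hp hv
  have hin : ∀ t ∈ Icc (0:ℝ) T, S.V (p + t • v) ≤ S.E := fun t ht => by
    rcases ht.2.eq_or_lt with rfl | h
    · exact hTE.le
    · exact (hTlt t ⟨ht.1, h⟩).le
  have hder : ∀ t ∈ Icc (0:ℝ) T, HasDerivAt (fun t : ℝ => S.V (p + t • v))
      (fderiv ℝ S.V (p + t • v) v) t := fun t ht => by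
    have h1 : HasDerivAt (fun t : ℝ => p + t • v) v t := by
      simpa using ((hasDerivAt_id t).smul_const v).const_add p
    exact (S.differentiableAt_V (S.hsub (hin t ht))).hasFDerivAt.comp_hasDerivAt t h1
  have hgrow : ∀ T' ≤ T, T' ≤ m / (2 * b) → ∀ s ∈ Icc (0:ℝ) T', ∀ t ∈ Icc (0:ℝ) T', s ≤ t →
      m * (t - s) ≤ S.V (p + t • v) - S.V (p + s • v) := by
    intro T' hT' hT'b s hs t ht hst
    have hsub : ∀ t ∈ Icc (0:ℝ) T', t ∈ Icc (0:ℝ) T := fun t ht => ⟨ht.1, ht.2.trans hT'⟩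
    refine (convex_Icc (0:ℝ) T').mul_sub_le_image_sub_of_le_deriv
      (f := fun t : ℝ => S.V (p + t • v))
      (fun t ht => (hder t (hsub t ht)).continuousAt.continuousWithinAt)
      (fun t ht => (hder t (hsub t (interior_subset ht))).differentiableAt.differentiableWithinAt)
      (fun t ht => ?_) s hs t ht hst
    have ht' := interior_subset ht
    rw [(hder t (hsub t ht')).deriv]
    refine hF p _ hp.le (hin t (hsub t ht')) hpm ?_
    rw [dist_eq_norm, sub_add_cancel_left, norm_neg, norm_smul, Real.norm_of_nonneg ht'.1]
    calc t * ‖v‖ ≤ m / (2 * b) * b := by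
          have := ht'.2.trans hT'b
          gcongr
      _ = m / 2 := by field_simp
      _ < m := by linarith
  have hTb : T ≤ m / (2 * b) := by
    by_contra! h
    have h0 : (0:ℝ) ≤ m / (2 * b) := by positivity
    have h1 := hgrow (m / (2 * b)) h.le le_rfl 0 ⟨le_rfl, h0⟩ _ ⟨h0, le_rfl⟩ h0
    have h2 := hTlt _ ⟨h0, h⟩
    simp only [zero_smul, add_zero, sub_zero] at h1
    have h3 := hpd.trans_le (min_le_right _ _)
    linarith
  refine ⟨p + T • v, hTE, ?_, fun θ hθ => ?_⟩
  · have h1 := hgrow T le_rfl hTb 0 ⟨le_rfl, hT.le⟩ T ⟨hT.le, le_rfl⟩ hT.le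
    simp only [zero_smul, add_zero, sub_zero, hTE] at h1
    rw [sub_add_cancel_left, norm_neg, norm_smul, Real.norm_of_nonneg hT.le]
    calc T * ‖v‖ ≤ T * b := by gcongr
      _ = b / m * (m * T) := by field_simp
      _ ≤ _ := by gcongr
  · have e : p + T • v + θ • (p - (p + T • v)) = p + ((1 - θ) * T) • v := by
      module
    have h0 : 0 ≤ (1 - θ) * T := mul_nonneg (by linarith [hθ.2]) hT.le
    have hlt : (1 - θ) * T < T := by nlinarith [hθ.1]
    rw [e]
    refine ⟨hTlt _ ⟨h0, hlt⟩, ?_⟩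
    have h1 := hgrow T le_rfl hTb 0 ⟨le_rfl, hT.le⟩ _ ⟨h0, hlt.le⟩ h0
    simp only [zero_smul, add_zero, sub_zero] at h1
    have : 0 ≤ m * ((1 - θ) * T) := by positivity
    linarith

end Setting

/-- A primitive of a square-integrable function is of class `H¹`. -/
lemma H1On_of_primitive {z f : ℝ → Vec N}
    (hd : ∀ᵐ s ∂volume.restrict (Icc (0:ℝ) 1), deriv z s = f s)
    (hf : IntegrableOn f (Icc 0 1)) (hf2 : IntegrableOn (fun s => ‖f s‖ ^ 2) (Icc 0 1))
    (h : ∀ t ∈ Icc (0:ℝ) 1, z t = z 0 + ∫ s in (0:ℝ)..t, f s) : H1On z 0 1 := by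
  have hI : IntegrableOn f (uIcc 0 1) := by rwa [uIcc_of_le zero_le_one]
  refine ⟨?_, hf.congr (hd.mono fun s hs => hs.symm),
    hf2.congr (hd.mono fun s hs => by simp only [hs]), fun t ht => ?_⟩
  · have := (intervalIntegral.continuousOn_primitive_interval hI).const_add (z 0)
    rw [uIcc_of_le zero_le_one] at this
    exact this.congr h
  · rw [h t ht]
    congr 1
    refine intervalIntegral.integral_congr_ae ?_
    rw [ae_restrict_iff' measurableSet_Icc] at hd
    filter_upwards [hd] with s hs hst
    rw [uIoc_of_le ht.1] at hst
    exact (hs ⟨hst.1.le, hst.2.trans ht.2⟩).symm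

lemma H1On.sub_eq_integral {x : ℝ → Vec N} (hx : H1On x 0 1) {a b : ℝ} (ha : 0 ≤ a) (hab : a ≤ b)
    (hb : b ≤ 1) : x b - x a = ∫ s in a..b, deriv x s := by
  have hI : ∀ c d, 0 ≤ c → c ≤ d → d ≤ 1 → IntervalIntegrable (deriv x) volume c d :=
    fun c d hc hcd hd => (intervalIntegrable_iff_integrableOn_Icc_of_le hcd).2
      (hx.2.1.mono_set (Icc_subset_Icc hc hd))
  rw [hx.2.2.2 a ⟨ha, hab.trans hb⟩, hx.2.2.2 b ⟨ha.trans hab, hb⟩,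
    ← intervalIntegral.integral_add_adjacent_intervals (hI 0 a le_rfl ha (hab.trans hb))
      (hI a b ha hab hb)]
  abel

namespace Setting

variable (S : Setting N)

/-- Measurability of `s ↦ g(y,w)` along a curve in `U`. -/
lemma aestronglyMeasurable_prod {x y w : ℝ → Vec N} {I : Set ℝ} (hI : MeasurableSet I)
    (hx : ContinuousOn x I) (hxU : ∀ s ∈ I, x s ∈ S.U)
    (hy : AEStronglyMeasurable y (volume.restrict I))
    (hw : AEStronglyMeasurable w (volume.restrict I)) :
    AEStronglyMeasurable (fun s => S.prod (x s) (y s) (w s)) (volume.restrict I) := by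
  unfold prod gP
  refine Finset.aestronglyMeasurable_fun_sum _ fun i _ =>
    Finset.aestronglyMeasurable_fun_sum _ fun j _ => ?_
  refine ((((S.continuousOn_g i j).comp hx hxU).aestronglyMeasurable hI).mul ?_).mul ?_
  · exact (continuous_apply i).comp_aestronglyMeasurable hy
  · exact (continuous_apply j).comp_aestronglyMeasurable hw

lemma aestronglyMeasurable_jac {x y : ℝ → Vec N} {I : Set ℝ} (hI : MeasurableSet I)
    (hx : ContinuousOn x I) (hxU : ∀ s ∈ I, x s ∈ S.U)
    (hy : AEStronglyMeasurable y (volume.restrict I)) :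
    AEStronglyMeasurable (fun s => S.jac (x s) (y s)) (volume.restrict I) := by
  unfold jac
  refine AEStronglyMeasurable.mul ?_ (S.aestronglyMeasurable_prod hI hx hxU hy hy)
  exact (continuousOn_const.mul (continuousOn_const.sub
    (S.hVC.continuousOn.comp hx hxU))).aestronglyMeasurable hI

variable {S}

lemma InXQ.le {Q : Vec N} {x : ℝ → Vec N} (hx : S.InXQ Q x) {s : ℝ} (hs : s ∈ Icc (0:ℝ) 1) :
    S.V (x s) ≤ S.E := by
  rcases hs.1.eq_or_lt with rfl | h
  · exact hx.2.1.le
  · exact (hx.2.2.1 s ⟨h, hs.2⟩).le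

lemma InXQ.integrableOn_speed {Q : Vec N} {x : ℝ → Vec N} (hx : S.InXQ Q x) :
    IntegrableOn (S.speed x) (Icc 0 1) := by
  obtain ⟨l, hl, L, hL, hb⟩ := S.exists_prod_bounds
  obtain ⟨B, hB⟩ := (S.hcomp.image_of_continuousOn
    ((continuousOn_const (c := S.E)).sub (S.hVC.continuousOn.mono S.hsub))).isBounded.exists_norm_le
  have hB0 : 0 ≤ B := (norm_nonneg _).trans (hB _ ⟨x 0, hx.2.1.le, rfl⟩)
  refine Integrable.mono' (g := fun s => Real.sqrt (1/2 * B * L) * ‖deriv x s‖)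
    (hx.1.2.1.norm.const_mul _) ?_ ?_
  · exact (S.aestronglyMeasurable_jac measurableSet_Icc hx.1.1 (fun s hs => S.mem_U (hx.le hs))
      (aestronglyMeasurable_deriv x _)).aemeasurable.sqrt.aestronglyMeasurable
  · refine (ae_restrict_iff' measurableSet_Icc).2 (Eventually.of_forall fun s hs => ?_)
    rw [Real.norm_of_nonneg (S.speed_nonneg x s), speed]
    have h1 : S.E - S.V (x s) ≤ B := (le_abs_self _).trans (hB _ ⟨x s, hx.le hs, rfl⟩)
    have h2 := (hb (x s) (hx.le hs) (deriv x s)).2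
    have h3 := S.prod_self_nonneg (S.mem_U (hx.le hs)) (deriv x s)
    have h4 : 0 ≤ S.E - S.V (x s) := by linarith [hx.le hs]
    rw [← Real.sqrt_sq (norm_nonneg (deriv x s)), ← Real.sqrt_mul (by positivity)]
    refine Real.sqrt_le_sqrt ?_
    rw [jac, mul_assoc (1/2 * B)]
    gcongr

lemma InXQ.intervalIntegrable_speed {Q : Vec N} {x : ℝ → Vec N} (hx : S.InXQ Q x) {a b : ℝ}
    (ha : 0 ≤ a) (hab : a ≤ b) (hb : b ≤ 1) : IntervalIntegrable (S.speed x) volume a b :=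
  (intervalIntegrable_iff_integrableOn_Icc_of_le hab).2
    (hx.integrableOn_speed.mono_set (Icc_subset_Icc ha hb))

lemma InXQ.intervalIntegrable_deriv {Q : Vec N} {x : ℝ → Vec N} (hx : S.InXQ Q x) {a b : ℝ}
    (ha : 0 ≤ a) (hab : a ≤ b) (hb : b ≤ 1) : IntervalIntegrable (deriv x) volume a b :=
  (intervalIntegrable_iff_integrableOn_Icc_of_le hab).2
    (hx.1.2.1.mono_set (Icc_subset_Icc ha hb))

lemma LV_nonneg (x : ℝ → Vec N) : 0 ≤ S.LV x :=
  intervalIntegral.integral_nonneg zero_le_one fun _ _ => Real.sqrt_nonneg _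

lemma InXQ.dV_le {Q : Vec N} {x : ℝ → Vec N} (hx : S.InXQ Q x) : S.dV Q ≤ S.LV x :=
  csInf_le ⟨0, by rintro r ⟨y, -, rfl⟩; exact LV_nonneg y⟩ ⟨x, hx, rfl⟩

/-- Replacing an initial arc of a curve in `X_Q` by a segment. -/
lemma InXQ.replace_initial {Q : Vec N} {x : ℝ → Vec N} (hx : S.InXQ Q x) {u : ℝ}
    (hu : u ∈ Ioc (0:ℝ) 1) {p' : Vec N} (hp' : S.V p' = S.E)
    (hseg : ∀ θ ∈ Ioc (0:ℝ) 1, S.V (p' + θ • (x u - p')) < S.E) :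
    S.InXQ Q (fun s => if s < u then p' + s • (u⁻¹ • (x u - p')) else x s) ∧
      ∀ s, s ≠ u → deriv (fun s => if s < u then p' + s • (u⁻¹ • (x u - p')) else x s) s
        = if s < u then u⁻¹ • (x u - p') else deriv x s := by
  set w := u⁻¹ • (x u - p') with hw
  set z : ℝ → Vec N := fun s => if s < u then p' + s • w else x s with hz
  set f : ℝ → Vec N := fun s => if s < u then w else deriv x s with hf
  have hder : ∀ s, s ≠ u → deriv z s = f s := by
    intro s hs
    rcases lt_or_gt_of_ne hs with h | h
    · have e : z =ᶠ[𝓝 s] fun s => p' + s • w := by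
        filter_upwards [Iio_mem_nhds h] with t ht
        exact if_pos ht
      have h1 : HasDerivAt (fun t : ℝ => p' + t • w) w s := by
        simpa using ((hasDerivAt_id s).smul_const w).const_add p'
      rw [e.deriv_eq, h1.deriv, hf]
      simp only [if_pos h]
    · have e : z =ᶠ[𝓝 s] x := by
        filter_upwards [Ioi_mem_nhds h] with t ht
        exact if_neg (not_lt.2 (le_of_lt ht))
      rw [e.deriv_eq, hf]
      simp only [if_neg (not_lt.2 h.le)]
  have hint : ∀ {F : Type} [NormedAddCommGroup F] (φ ψ : ℝ → F), IntegrableOn ψ (Icc 0 1) →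
      (∃ c, φ = fun _ => c) → IntegrableOn (fun s => if s < u then φ s else ψ s) (Icc 0 1) := by
    rintro F _ φ ψ hψ ⟨c, rfl⟩
    exact Integrable.piecewise (s := Iio u) measurableSet_Iio
      (integrable_const c).integrableOn hψ.integrableOn
  have hfI : IntegrableOn f (Icc 0 1) := hint (fun _ => w) (deriv x) hx.1.2.1 ⟨w, rfl⟩
  have hfI2 : IntegrableOn (fun s => ‖f s‖ ^ 2) (Icc 0 1) := by
    have := hint (fun _ => ‖w‖ ^ 2) (fun s => ‖deriv x s‖ ^ 2) hx.1.2.2.1 ⟨_, rfl⟩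
    refine this.congr (Eventually.of_forall fun s => ?_)
    simp only [hf]
    split_ifs <;> rfl
  have hz0 : z 0 = p' := by simp [hz, hu.1]
  have huw : p' + u • w = x u := by
    rw [hw, smul_smul, mul_inv_cancel₀ hu.1.ne', one_smul]; abel
  have hlin : ∀ t ∈ Icc (0:ℝ) u, ∫ s in (0:ℝ)..t, f s = t • w := by
    intro t ht
    have : ∫ s in (0:ℝ)..t, f s = ∫ s in (0:ℝ)..t, w := by
      refine intervalIntegral.integral_congr_ae ?_
      filter_upwards [compl_mem_ae_iff.2 (measure_singleton u)] with s hs hst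
      rw [uIoc_of_le ht.1] at hst
      exact if_pos (lt_of_le_of_ne (hst.2.trans ht.2) hs)
    rw [this, intervalIntegral.integral_const, sub_zero]
  have hfi : ∀ a b, 0 ≤ a → a ≤ b → b ≤ 1 → IntervalIntegrable f volume a b :=
    fun a b h1 h2 h3 => (intervalIntegrable_iff_integrableOn_Icc_of_le h2).2
      (hfI.mono_set (Icc_subset_Icc h1 h3))
  have hprim : ∀ t ∈ Icc (0:ℝ) 1, z t = z 0 + ∫ s in (0:ℝ)..t, f s := by
    intro t ht
    rcases lt_or_ge t u with h | h
    · rw [hlin t ⟨ht.1, h.le⟩, hz0]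
      simp only [hz, if_pos h]
    · rw [← intervalIntegral.integral_add_adjacent_intervals (hfi 0 u le_rfl hu.1.le hu.2)
        (hfi u t hu.1.le h ht.2), hlin u ⟨hu.1.le, le_rfl⟩, hz0, ← add_assoc, huw]
      have : ∫ s in u..t, f s = ∫ s in u..t, deriv x s := by
        refine intervalIntegral.integral_congr fun s hs => ?_
        rw [uIcc_of_le h] at hs
        exact if_neg (not_lt.2 hs.1)
      rw [this, ← hx.1.sub_eq_integral hu.1.le h ht.2]
      simp only [hz, if_neg (not_lt.2 h)]
      abel
  refine ⟨⟨H1On_of_primitive ?_ hfI hfI2 hprim, by rw [hz0, hp'], fun s hs => ?_, ?_⟩, hder⟩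
  · refine ae_restrict_of_ae ?_
    filter_upwards [compl_mem_ae_iff.2 (measure_singleton u)] with s hs
    exact hder s hs
  · rcases lt_or_ge s u with h | h
    · simp only [hz, if_pos h, hw, smul_smul]
      refine hseg _ ⟨mul_pos hs.1 (inv_pos.2 hu.1), ?_⟩
      rw [← div_eq_mul_inv, div_le_one hu.1]; exact h.le
    · simp only [hz, if_neg (not_lt.2 h)]
      exact hx.2.2.1 s hs
  · simp only [hz, if_neg (not_lt.2 hu.2)]
    exact hx.2.2.2

/-- The collar estimate: the distance to the boundary is at most the length of a final arc of a
competitor plus a multiple of `(E−V)^{3/2}` at the starting point of this arc. -/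
lemma exists_dV_le (Q : Vec N) : ∃ C > 0, ∀ x, S.InXQ Q x → ∀ u ∈ Ioc (0:ℝ) 1,
    S.dV Q ≤ C * ((S.E - S.V (x u)) * Real.sqrt (S.E - S.V (x u)))
      + ∫ s in u..1, S.speed x s := by
  obtain ⟨l, hl, L, hL, hb⟩ := S.exists_prod_bounds
  obtain ⟨C, hC, d, hd, hcol⟩ := S.exists_collar
  have hd' : 0 < d * Real.sqrt d := mul_pos hd (Real.sqrt_pos.2 hd)
  have hL' : 0 < Real.sqrt (1/2 * L) := Real.sqrt_pos.2 (by positivity)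
  refine ⟨max (|S.dV Q| / (d * Real.sqrt d)) (Real.sqrt (1/2 * L) * C),
    lt_max_of_lt_right (by positivity), fun x hx u hu => ?_⟩
  have hp := hx.2.2.1 u hu
  set h := S.E - S.V (x u) with hh
  have hpos : 0 < h := by linarith
  have hrest : 0 ≤ ∫ s in u..1, S.speed x s :=
    intervalIntegral.integral_nonneg hu.2 fun _ _ => S.speed_nonneg _ _
  have hhs : 0 ≤ h * Real.sqrt h := by positivity
  rcases lt_or_ge h d with hlt | hge
  · obtain ⟨p', hp'E, hp'n, hseg⟩ := hcol _ hp hlt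
    obtain ⟨hz, hder⟩ := hx.replace_initial hu hp'E fun θ hθ => (hseg θ hθ).1
    set z : ℝ → Vec N := fun s => if s < u then p' + s • (u⁻¹ • (x u - p')) else x s with hzd
    refine hz.dV_le.trans ?_
    rw [LV_eq, ← intervalIntegral.integral_add_adjacent_intervals
      (hz.intervalIntegrable_speed le_rfl hu.1.le hu.2)
      (hz.intervalIntegrable_speed hu.1.le hu.2 le_rfl)]
    have e2 : ∫ s in u..1, S.speed z s = ∫ s in u..1, S.speed x s := by
      refine intervalIntegral.integral_congr_ae ?_
      filter_upwards with s hs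
      rw [uIoc_of_le hu.2] at hs
      have hsu : ¬ s < u := not_lt.2 hs.1.le
      rw [speed, speed, hder s hs.1.ne', if_neg hsu]
      simp only [hzd, if_neg hsu]
    rw [e2]
    gcongr
    set c := Real.sqrt (1/2 * L) * Real.sqrt h * (C * h) with hc
    have e1 : ∫ s in (0:ℝ)..u, S.speed z s ≤ ∫ s in (0:ℝ)..u, c * u⁻¹ := by
      refine intervalIntegral.integral_mono_ae_restrict hu.1.le
        (hz.intervalIntegrable_speed le_rfl hu.1.le hu.2) intervalIntegrable_const ?_
      rw [EventuallyLE, ae_restrict_iff' measurableSet_Icc]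
      filter_upwards [compl_mem_ae_iff.2 (measure_singleton u),
        compl_mem_ae_iff.2 (measure_singleton 0)] with s hs hs0 hsI
      have hsu : s < u := lt_of_le_of_ne hsI.2 hs
      have hs0 : 0 < s := lt_of_le_of_ne hsI.1 (Ne.symm hs0)
      have hθ : s * u⁻¹ ∈ Ioc (0:ℝ) 1 := ⟨mul_pos hs0 (inv_pos.2 hu.1), by
        rw [← div_eq_mul_inv, div_le_one hu.1]; exact hsu.le⟩
      obtain ⟨h1, h2⟩ := hseg _ hθ
      rw [speed, hder s hs, if_pos hsu]
      have ez : z s = p' + (s * u⁻¹) • (x u - p') := by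
        simp only [hzd, if_pos hsu, smul_smul]
      rw [ez, jac_smul, Real.sqrt_mul (sq_nonneg _), Real.sqrt_sq (inv_nonneg.2 hu.1.le), mul_comm]
      refine mul_le_mul_of_nonneg_right ?_ (inv_nonneg.2 hu.1.le)
      have h3 := (hb _ h1.le (x u - p')).2
      have h4 : S.jac (p' + (s * u⁻¹) • (x u - p')) (x u - p')
          ≤ 1/2 * L * h * (C * h) ^ 2 := by
        have h5 : ‖x u - p'‖ ^ 2 ≤ (C * h) ^ 2 := by gcongr
        have h6 := S.prod_self_nonneg (S.mem_U h1.le) (x u - p')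
        calc _ ≤ 1/2 * h * (L * (C * h) ^ 2) := by
              unfold jac
              gcongr
              exact h3.trans (by gcongr)
          _ = _ := by ring
      refine (Real.sqrt_le_sqrt h4).trans_eq ?_
      rw [Real.sqrt_mul (by positivity), Real.sqrt_sq (by positivity),
        Real.sqrt_mul (by positivity)]
    refine e1.trans ?_
    rw [intervalIntegral.integral_const, sub_zero, smul_eq_mul]
    have hu0 := hu.1.ne'
    calc u * (c * u⁻¹) = c := by field_simp
      _ = Real.sqrt (1/2 * L) * C * (h * Real.sqrt h) := by rw [hc]; ring
      _ ≤ _ := by gcongr; exact le_max_right _ _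
  · have h1 : d * Real.sqrt d ≤ h * Real.sqrt h := by gcongr
    have h2 : |S.dV Q| ≤ max (|S.dV Q| / (d * Real.sqrt d)) (Real.sqrt (1/2 * L) * C)
        * (h * Real.sqrt h) := by
      calc |S.dV Q| = |S.dV Q| / (d * Real.sqrt d) * (d * Real.sqrt d) := by field_simp
        _ ≤ _ := by gcongr; exact le_max_left _ _
    linarith [le_abs_self (S.dV Q)]

end Setting

namespace Setting

variable (S : Setting N)

lemma exists_norm_le_sqrt_jac : ∃ k > 0, ∀ x, S.V x ≤ S.E → ∀ v : Vec N,
    k * Real.sqrt (S.E - S.V x) * ‖v‖ ≤ Real.sqrt (S.jac x v) := by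
  obtain ⟨l, hl, L, hL, hb⟩ := S.exists_prod_bounds
  refine ⟨Real.sqrt (l / 2), Real.sqrt_pos.2 (by positivity), fun x hx v => ?_⟩
  have h0 : 0 ≤ S.E - S.V x := by linarith
  rw [← Real.sqrt_sq (norm_nonneg v), ← Real.sqrt_mul (by positivity),
    ← Real.sqrt_mul (by positivity)]
  refine Real.sqrt_le_sqrt ?_
  calc l / 2 * (S.E - S.V x) * ‖v‖ ^ 2 = 1/2 * (S.E - S.V x) * (l * ‖v‖ ^ 2) := by ring
    _ ≤ _ := by
      unfold jac
      gcongr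
      exact (hb x hx v).1

/-- Away from the boundary of the well, the Jacobi length controls displacements. -/
lemma exists_displacement_le : ∃ k > 0, ∀ Q x, S.InXQ Q x → ∀ a b m, 0 ≤ a → a ≤ b → b ≤ 1 →
    (∀ u ∈ Ioc a b, m ≤ S.E - S.V (x u)) →
      k * Real.sqrt m * ‖x b - x a‖ ≤ ∫ s in a..b, S.speed x s := by
  obtain ⟨k, hk, hkb⟩ := S.exists_norm_le_sqrt_jac
  refine ⟨k, hk, fun Q x hx a b m ha hab hb hm => ?_⟩
  rw [hx.1.sub_eq_integral ha hab hb]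
  have hI := hx.intervalIntegrable_deriv ha hab hb
  calc k * Real.sqrt m * ‖∫ s in a..b, deriv x s‖
      ≤ k * Real.sqrt m * ∫ s in a..b, ‖deriv x s‖ := by
        gcongr
        exact intervalIntegral.norm_integral_le_integral_norm hab
    _ = ∫ s in a..b, k * Real.sqrt m * ‖deriv x s‖ :=
        (intervalIntegral.integral_const_mul _ _).symm
    _ ≤ _ := by
        refine intervalIntegral.integral_mono_ae_restrict hab (hI.norm.const_mul _)
          (hx.intervalIntegrable_speed ha hab hb) ?_
        rw [EventuallyLE, ae_restrict_iff' measurableSet_Icc]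
        filter_upwards [compl_mem_ae_iff.2 (measure_singleton a)] with s hs hsI
        have hsI' : s ∈ Ioc a b := ⟨lt_of_le_of_ne hsI.1 (Ne.symm hs), hsI.2⟩
        refine le_trans ?_ (hkb (x s) (hx.le ⟨ha.trans hsI.1, hsI.2.trans hb⟩) _)
        gcongr
        exact hm s hsI'

/-- Curves starting from the boundary need a definite length to go inside the well. -/
lemma exists_length_lower_bound {M : ℝ} (hM : 0 < M) : ∃ φ > 0, ∀ Q x, S.InXQ Q x →
    ∀ t ∈ Icc (0:ℝ) 1, M ≤ S.E - S.V (x t) → φ ≤ ∫ s in (0:ℝ)..t, S.speed x s := by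
  obtain ⟨k, hk, hkb⟩ := S.exists_displacement_le
  have huc := S.hcomp.uniformContinuousOn_of_continuous (S.hVC.continuousOn.mono S.hsub)
  obtain ⟨η, hη, hηV⟩ := Metric.uniformContinuousOn_iff.1 huc (M / 2) (by positivity)
  have hM2 : 0 < Real.sqrt (M / 2) := Real.sqrt_pos.2 (by positivity)
  refine ⟨k * Real.sqrt (M / 2) * η, by positivity, fun Q x hx t ht hMt => ?_⟩
  have hcont : ContinuousOn (fun s => S.V (x s)) (Icc 0 t) :=
    S.hVC.continuousOn.comp (hx.1.1.mono (Icc_subset_Icc le_rfl ht.2))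
      fun s hs => S.mem_U (hx.le ⟨hs.1, hs.2.trans ht.2⟩)
  set A := Icc 0 t ∩ (fun s => S.V (x s)) ⁻¹' Ici (S.E - M / 2) with hA
  have hAc : IsClosed A := hcont.preimage_isClosed_of_isClosed isClosed_Icc isClosed_Ici
  have hAne : A.Nonempty := ⟨0, ⟨le_rfl, ht.1⟩, by
    change S.E - M / 2 ≤ S.V (x 0)
    rw [hx.2.1]; linarith⟩
  have hAb : BddAbove A := ⟨t, fun s hs => hs.1.2⟩
  set t₀ := sSup A
  have ht₀ : t₀ ∈ A := hAc.csSup_mem hAne hAb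
  have hV₀ : S.E - M / 2 ≤ S.V (x t₀) := ht₀.2
  have hafter : ∀ u ∈ Ioc t₀ t, M / 2 ≤ S.E - S.V (x u) := by
    intro u hu
    by_contra h
    have : u ∈ A := ⟨⟨ht₀.1.1.trans hu.1.le, hu.2⟩, by
      change S.E - M / 2 ≤ S.V (x u)
      linarith⟩
    exact absurd (le_csSup hAb this) (not_le.2 hu.1)
  have h1 := hkb Q x hx t₀ t (M / 2) ht₀.1.1 ht₀.1.2 ht.2 hafter
  have h2 : η ≤ ‖x t - x t₀‖ := by
    by_contra! h
    have := hηV (x t) (hx.le ht) (x t₀) (hx.le ⟨ht₀.1.1, ht₀.1.2.trans ht.2⟩)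
      (by rwa [dist_eq_norm])
    rw [Real.dist_eq, abs_lt] at this
    linarith
  have h3 : ∫ s in t₀..t, S.speed x s ≤ ∫ s in (0:ℝ)..t, S.speed x s := by
    rw [← intervalIntegral.integral_add_adjacent_intervals
      (hx.intervalIntegrable_speed le_rfl ht₀.1.1 (ht₀.1.2.trans ht.2))
      (hx.intervalIntegrable_speed ht₀.1.1 ht₀.1.2 ht.2)]
    have : 0 ≤ ∫ s in (0:ℝ)..t₀, S.speed x s :=
      intervalIntegral.integral_nonneg ht₀.1.1 fun _ _ => S.speed_nonneg _ _
    linarith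
  calc _ ≤ k * Real.sqrt (M / 2) * ‖x t - x t₀‖ := by gcongr
    _ ≤ _ := h1.trans h3

/-- The Jacobi quadratic form is almost constant near a point of the well. -/
lemma eventually_jac_le {p : Vec N} (hp : S.V p < S.E) {η : ℝ} (hη : 0 < η) :
    ∀ᶠ y in 𝓝 p, ∀ v, S.jac p v ≤ (1 + η) ^ 2 * S.jac y v := by
  have hU : S.U ∈ 𝓝 p := S.hU.mem_nhds (S.mem_U hp.le)
  have key : ∀ᶠ y in 𝓝 p, ∀ v ∈ Metric.sphere (0 : Vec N) 1,
      S.jac p v < (1 + η) ^ 2 * S.jac y v := by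
    refine (isCompact_sphere (0 : Vec N) 1).eventually_forall_of_forall_eventually fun v hv => ?_
    have hv0 : v ≠ 0 := by rintro rfl; simp at hv
    have hpos := S.jac_pos hp hv0
    have hc : ContinuousAt (fun z : Vec N × Vec N => S.jac z.1 z.2) (p, v) :=
      S.continuousOn_jac.continuousAt (prod_mem_nhds hU univ_mem)
    have hc2 : ContinuousAt (fun z : Vec N × Vec N => S.jac p z.2) (p, v) :=
      (hc.comp (f := fun z : Vec N × Vec N => (p, z.2)) (x := (p, v))
        (by fun_prop : Continuous fun z : Vec N × Vec N => (p, z.2)).continuousAt)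
    refine hc2.eventually_lt (hc.const_mul _) ?_
    exact lt_mul_of_one_lt_left hpos (one_lt_pow₀ (by linarith) two_ne_zero)
  filter_upwards [key] with y hy v
  rcases eq_or_ne v 0 with rfl | hv
  · simp [jac, prod, gP]
  have hv' : 0 < ‖v‖ := norm_pos_iff.2 hv
  have e : v = ‖v‖ • (‖v‖⁻¹ • v) := by rw [smul_smul, mul_inv_cancel₀ hv'.ne', one_smul]
  have := (hy (‖v‖⁻¹ • v) (by simp [norm_smul, hv'.ne'])).le
  have e' : ∀ x, S.jac x v = ‖v‖ ^ 2 * S.jac x (‖v‖⁻¹ • v) := fun x => by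
    conv_lhs => rw [e, jac_smul]
  rw [e' p, e' y, mul_left_comm]
  gcongr

/-- The integral triangle inequality for a frozen inner product. -/
lemma sqrt_jac_integral_le {p : Vec N} (hp : S.V p ≤ S.E) {f : ℝ → Vec N} {σ : ℝ → ℝ} {a b : ℝ}
    (hab : a ≤ b) (hf : IntervalIntegrable f volume a b) (hσ : IntervalIntegrable σ volume a b)
    (h : ∀ s ∈ Icc a b, Real.sqrt (S.jac p (f s)) ≤ σ s) :
    Real.sqrt (S.jac p (∫ s in a..b, f s)) ≤ ∫ s in a..b, σ s := by
  have hpU := S.mem_U hp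
  set w := ∫ s in a..b, f s with hw
  have hc : 0 ≤ (1/2) * (S.E - S.V p) := by linarith
  let Lw : Vec N →L[ℝ] ℝ := LinearMap.toContinuousLinearMap
    { toFun := S.prod p w
      map_add' := S.prod_add_right p w
      map_smul' := fun c v => S.prod_smul_right p w v c }
  have hLw : ∀ v, Lw v = S.prod p w v := fun v => rfl
  have h1 : S.prod p w w = ∫ s in a..b, S.prod p w (f s) := by
    conv_lhs => rw [← hLw, hw, ← Lw.intervalIntegral_comp_comm hf]
    rfl
  have hpt : ∀ v, 1/2 * (S.E - S.V p) * S.prod p w v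
      ≤ Real.sqrt (S.jac p w) * Real.sqrt (S.jac p v) := by
    intro v
    rw [jac, jac, Real.sqrt_mul hc, Real.sqrt_mul hc]
    have h2 := S.prod_le_sqrt_mul_sqrt hpU w v
    have h3 := Real.mul_self_sqrt hc
    calc _ ≤ 1/2 * (S.E - S.V p) * (Real.sqrt (S.prod p w w) * Real.sqrt (S.prod p v v)) := by
          gcongr
      _ = _ := by
          conv_lhs => rw [← h3]
          ring
  set W := Real.sqrt (S.jac p w) with hW
  have hW0 : 0 ≤ W := Real.sqrt_nonneg _
  have hsq : W * W ≤ W * ∫ s in a..b, σ s := by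
    rw [hW, Real.mul_self_sqrt (S.jac_nonneg hp w), ← hW, jac, h1,
      ← intervalIntegral.integral_const_mul, ← intervalIntegral.integral_const_mul]
    have hfi : IntervalIntegrable (fun s => S.prod p w (f s)) volume a b :=
      ⟨Lw.integrable_comp hf.1, Lw.integrable_comp hf.2⟩
    refine intervalIntegral.integral_mono_on hab (hfi.const_mul _) (hσ.const_mul _)
      fun s hs => (hpt (f s)).trans ?_
    gcongr
    exact h s hs
  rcases hW0.eq_or_lt with h0 | h0
  · rw [← h0]
    exact intervalIntegral.integral_nonneg hab fun s hs => (Real.sqrt_nonneg _).trans (h s hs)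
  · exact le_of_mul_le_mul_left hsq h0

/-- Near a point `p` of the well, the displacement measured in the Jacobi norm at `p` is
almost bounded by the Jacobi length. -/
lemma exists_frozen_displacement_le {p : Vec N} (hp : S.V p < S.E) {η : ℝ} (hη : 0 < η) :
    ∃ ρ > 0, ∀ Q x, S.InXQ Q x → ∀ a b, 0 ≤ a → a ≤ b → b ≤ 1 →
      (∀ u ∈ Icc a b, dist (x u) p < ρ) →
        Real.sqrt (S.jac p (x b - x a)) ≤ (1 + η) * ∫ s in a..b, S.speed x s := by
  obtain ⟨ρ, hρ, hball⟩ := Metric.eventually_nhds_iff.1 (S.eventually_jac_le hp hη)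
  refine ⟨ρ, hρ, fun Q x hx a b ha hab hb hd => ?_⟩
  rw [hx.1.sub_eq_integral ha hab hb, ← intervalIntegral.integral_const_mul]
  refine S.sqrt_jac_integral_le hp.le hab (hx.intervalIntegrable_deriv ha hab hb)
    ((hx.intervalIntegrable_speed ha hab hb).const_mul _) fun s hs => ?_
  refine (Real.sqrt_le_sqrt (hball (hd s hs) _)).trans_eq ?_
  rw [Real.sqrt_mul (by positivity), Real.sqrt_sq (by positivity), speed]

end Setting

lemma rpow_two_thirds_le {A H : ℝ} (hA : 0 ≤ A) (hH : 0 ≤ H) (h : A ≤ H * Real.sqrt H) :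
    A ^ (2/3 : ℝ) ≤ H := by
  rcases hH.eq_or_lt with rfl | hH'
  · have : A = 0 := le_antisymm (by simpa using h) hA
    rw [this, Real.zero_rpow (by norm_num)]
  · calc A ^ (2/3 : ℝ) ≤ (H * Real.sqrt H) ^ (2/3 : ℝ) :=
        Real.rpow_le_rpow hA h (by norm_num)
      _ = (H ^ (3/2 : ℝ)) ^ (2/3 : ℝ) := by
        congr 1
        rw [Real.sqrt_eq_rpow]
        nth_rewrite 1 [← Real.rpow_one H]
        rw [← Real.rpow_add hH']
        norm_num
      _ = H := by
        rw [← Real.rpow_mul hH]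
        norm_num

namespace Setting

variable {S : Setting N}

lemma exists_inXQ {Q : Vec N} (hQ : S.V Q < S.E) : ∃ x, S.InXQ Q x := by
  have hv : (Pi.single ⟨0, S.hdim⟩ 1 : Vec N) ≠ 0 := by simp
  obtain ⟨T, hT, hTE, hlt⟩ := S.exists_first_exit hQ hv
  set v : Vec N := Pi.single ⟨0, S.hdim⟩ 1
  have hder : ∀ s : ℝ, HasDerivAt (fun s : ℝ => Q + ((1 - s) * T) • v) (-(T • v)) s := by
    intro s
    have h1 : HasDerivAt (fun s : ℝ => (1 - s) * T) (-1 * T) s :=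
      ((hasDerivAt_id s).const_sub 1).mul_const T
    have h2 := (h1.smul_const v).const_add Q
    have h3 : -(T • v) = (-1 * T) • v := by rw [neg_one_mul, neg_smul]
    rw [h3]
    exact h2
  refine ⟨fun s => Q + ((1 - s) * T) • v, H1On_of_primitive (f := fun _ => -(T • v))
    (Eventually.of_forall fun s => (hder s).deriv) continuous_const.integrableOn_Icc
    continuous_const.integrableOn_Icc fun t _ => ?_, ?_, fun s hs => ?_, ?_⟩
  · rw [intervalIntegral.integral_const]
    module
  · simpa using hTE
  · refine hlt _ ⟨mul_nonneg (by linarith [hs.2]) hT.le, ?_⟩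
    nlinarith [hs.1]
  · simp

lemma dV_pos {Q : Vec N} (hQ : S.V Q < S.E) : 0 < S.dV Q := by
  obtain ⟨φ, hφ, h⟩ := S.exists_length_lower_bound (M := S.E - S.V Q) (by linarith)
  obtain ⟨x₀, hx₀⟩ := exists_inXQ hQ
  refine hφ.trans_le (le_csInf ⟨_, x₀, hx₀, rfl⟩ ?_)
  rintro r ⟨x, hx, rfl⟩
  exact h Q x hx 1 ⟨zero_le_one, le_rfl⟩ (by rw [hx.2.2.2])

/-- A (possibly discontinuous) arc-length parameter change. -/
lemma InXQ.exists_arclength {Q : Vec N} {x : ℝ → Vec N} (hx : S.InXQ Q x) :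
    ∃ τ : ℝ → ℝ, τ 1 = 1 ∧ ∀ s ∈ Icc (0:ℝ) 1, τ s ∈ Icc (0:ℝ) 1 ∧
      ∫ u in (0:ℝ)..τ s, S.speed x u = s * S.LV x := by
  have hc : ContinuousOn (fun t => ∫ u in (0:ℝ)..t, S.speed x u) (Icc 0 1) := by
    have := intervalIntegral.continuousOn_primitive_interval (f := S.speed x) (a := 0) (b := 1)
      (μ := volume) (by rw [uIcc_of_le zero_le_one]; exact hx.integrableOn_speed)
    rwa [uIcc_of_le zero_le_one] at this
  have hivt := intermediate_value_Icc zero_le_one hc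
  have hex : ∀ s : ℝ, ∃ τ, s ∈ Icc (0:ℝ) 1 → τ ∈ Icc (0:ℝ) 1 ∧
      ∫ u in (0:ℝ)..τ, S.speed x u = s * S.LV x := by
    intro s
    by_cases hs : s ∈ Icc (0:ℝ) 1
    · have hmem : s * S.LV x ∈
          Icc (∫ u in (0:ℝ)..0, S.speed x u) (∫ u in (0:ℝ)..1, S.speed x u) := by
        rw [intervalIntegral.integral_same, ← LV_eq]
        exact ⟨mul_nonneg hs.1 (LV_nonneg x), mul_le_of_le_one_left (LV_nonneg x) hs.2⟩
      obtain ⟨τ, hτ, he⟩ := hivt hmem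
      exact ⟨τ, fun _ => And.intro hτ he⟩
    · exact ⟨0, fun h => absurd h hs⟩
  choose τ hτ using hex
  refine ⟨Function.update τ 1 1, by simp, fun s hs => ?_⟩
  rcases eq_or_ne s 1 with rfl | h1
  · simp [LV_eq]
  · rw [Function.update_of_ne h1]
    exact hτ s hs

lemma exists_minimizing_sequence {Q : Vec N} (hQ : S.V Q < S.E) : ∃ x : ℕ → ℝ → Vec N,
    ∀ n, S.InXQ Q (x n) ∧ S.LV (x n) ≤ S.dV Q + 1 / ((n : ℝ) + 1) := by
  obtain ⟨x₀, hx₀⟩ := exists_inXQ hQ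
  have : ∀ n : ℕ, ∃ x, S.InXQ Q x ∧ S.LV x ≤ S.dV Q + 1 / ((n : ℝ) + 1) := by
    intro n
    have hlt : S.dV Q < S.dV Q + 1 / ((n : ℝ) + 1) := by
      have : 0 < 1 / ((n : ℝ) + 1) := by positivity
      linarith
    have hne : {r | ∃ x, S.InXQ Q x ∧ r = S.LV x}.Nonempty := ⟨_, x₀, hx₀, rfl⟩
    obtain ⟨r, ⟨x, hx, rfl⟩, h⟩ := exists_lt_of_csInf_lt hne hlt
    exact ⟨x, hx, h.le⟩
  choose x hx using this
  exact ⟨x, hx⟩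

/-- The limit of a minimizing sequence parameterized proportionally to the Jacobi arc length. -/
lemma exists_limit_curve {Q : Vec N} (hQ : S.V Q < S.E) : ∃ γ : ℝ → Vec N, γ 1 = Q ∧
    (∃ κ > 0, (∀ s ∈ Ioc (0:ℝ) 1, (κ * s) ^ (2/3 : ℝ) ≤ S.E - S.V (γ s)) ∧
      ∃ k > 0, ∀ s t, 0 < s → s ≤ t → t ≤ 1 →
        k * Real.sqrt ((κ * s) ^ (2/3 : ℝ)) * ‖γ t - γ s‖ ≤ (t - s) * S.dV Q) ∧
    (∀ s ∈ Ioo (0:ℝ) 1, ∀ η > 0, ∃ r > 0, ∀ t, s ≤ t → t < s + r → t ≤ 1 →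
      Real.sqrt (S.jac (γ s) (γ t - γ s)) ≤ (1 + η) * ((t - s) * S.dV Q)) ∧
    (∀ M > 0, ∃ φ > 0, ∀ s ∈ Ioc (0:ℝ) 1, M ≤ S.E - S.V (γ s) → φ ≤ s * S.dV Q) := by
  set ℓ := S.dV Q with hℓ
  have hℓ0 : 0 < ℓ := dV_pos hQ
  obtain ⟨x, hx⟩ := exists_minimizing_sequence hQ
  have hxQ := fun n => (hx n).1
  have hxL := fun n => (hx n).2
  have hLge : ∀ n, ℓ ≤ S.LV (x n) := fun n => (hxQ n).dV_le
  have hLpos : ∀ n, 0 < S.LV (x n) := fun n => hℓ0.trans_le (hLge n)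
  choose τ hτ1 hτ using fun n => (hxQ n).exists_arclength
  have hF : ((hyperfilter ℕ : Ultrafilter ℕ) : Filter ℕ) ≤ atTop := Nat.hyperfilter_le_atTop
  have hone : Tendsto (fun n : ℕ => 1 / ((n : ℝ) + 1)) (hyperfilter ℕ) (𝓝 0) :=
    tendsto_one_div_add_atTop_nhds_zero_nat.mono_left hF
  have hLlim : Tendsto (fun n => S.LV (x n)) (hyperfilter ℕ) (𝓝 ℓ) := by
    refine tendsto_of_tendsto_of_tendsto_of_le_of_le tendsto_const_nhds
      (by simpa using hone.const_add ℓ) hLge hxL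
  have hint : ∀ n a b, 0 ≤ a → a ≤ b → b ≤ 1 →
      (∫ u in (0:ℝ)..a, S.speed (x n) u) + ∫ u in a..b, S.speed (x n) u
        = ∫ u in (0:ℝ)..b, S.speed (x n) u := fun n a b ha hab hb =>
    intervalIntegral.integral_add_adjacent_intervals
      ((hxQ n).intervalIntegrable_speed le_rfl ha (hab.trans hb))
      ((hxQ n).intervalIntegrable_speed ha hab hb)
  have hnn : ∀ n a b, a ≤ b → 0 ≤ ∫ u in a..b, S.speed (x n) u := fun n a b hab =>
    intervalIntegral.integral_nonneg hab fun _ _ => S.speed_nonneg _ _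
  have hτmono : ∀ n s t, 0 ≤ s → s ≤ t → t ≤ 1 → τ n s ≤ τ n t := by
    intro n s t hs hst ht
    rcases hst.eq_or_lt with rfl | hlt
    · exact le_rfl
    by_contra! h
    obtain ⟨h1, h2⟩ := hτ n s ⟨hs, hst.trans ht⟩
    obtain ⟨h3, h4⟩ := hτ n t ⟨hs.trans hst, ht⟩
    have h5 := hint n _ _ h3.1 h.le h1.2
    have h6 := hnn n _ _ h.le
    have h7 : s * S.LV (x n) < t * S.LV (x n) := by gcongr; exact hLpos n
    linarith
  have hτdiff : ∀ n s t, 0 ≤ s → s ≤ t → t ≤ 1 →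
      ∫ u in (τ n s)..(τ n t), S.speed (x n) u = (t - s) * S.LV (x n) := by
    intro n s t hs hst ht
    obtain ⟨h1, h2⟩ := hτ n s ⟨hs, hst.trans ht⟩
    obtain ⟨h3, h4⟩ := hτ n t ⟨hs.trans hst, ht⟩
    have := hint n _ _ h1.1 (hτmono n s t hs hst ht) h3.2
    linarith
  have hτpos : ∀ n s, 0 < s → s ≤ 1 → 0 < τ n s := by
    intro n s hs hs1
    obtain ⟨h1, h2⟩ := hτ n s ⟨hs.le, hs1⟩
    refine lt_of_le_of_ne h1.1 fun h0 => ?_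
    rw [← h0, intervalIntegral.integral_same] at h2
    have := mul_pos hs (hLpos n)
    linarith
  have hlimex : ∀ s, ∃ p, s ∈ Icc (0:ℝ) 1 → S.V p ≤ S.E ∧
      Tendsto (fun n => x n (τ n s)) (hyperfilter ℕ) (𝓝 p) := by
    intro s
    by_cases hs : s ∈ Icc (0:ℝ) 1
    · obtain ⟨p, hp, hle⟩ := S.hcomp.ultrafilter_le_nhds
        ((hyperfilter ℕ).map fun n => x n (τ n s))
        (le_principal_iff.2 (Filter.mem_map.2
          (Eventually.of_forall fun n => (hxQ n).le (hτ n s hs).1)))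
      exact ⟨p, fun _ => ⟨hp, hle⟩⟩
    · exact ⟨0, fun h => absurd h hs⟩
  choose γ hγ using hlimex
  have hγE := fun s hs => (hγ s hs).1
  have hγlim := fun s hs => (hγ s hs).2
  have hVlim : ∀ s ∈ Icc (0:ℝ) 1,
      Tendsto (fun n => S.V (x n (τ n s))) (hyperfilter ℕ) (𝓝 (S.V (γ s))) := fun s hs =>
    (S.differentiableAt_V (S.mem_U (hγE s hs))).continuousAt.tendsto.comp (hγlim s hs)
  obtain ⟨C, hC, hCb⟩ := S.exists_dV_le Q
  set κ := ℓ / (2 * C) with hκ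
  have hκ0 : 0 < κ := by positivity
  have hlow : ∀ s ∈ Ioc (0:ℝ) 1, ∀ᶠ n in hyperfilter ℕ, ∀ u ∈ Icc (τ n s) 1,
      (κ * s) ^ (2/3 : ℝ) ≤ S.E - S.V (x n u) := by
    intro s hs
    have hev : ∀ᶠ n : ℕ in hyperfilter ℕ, 1 / ((n : ℝ) + 1) < s * ℓ / 2 :=
      hone.eventually_lt_const (by have := hs.1; positivity)
    filter_upwards [hev] with n hn u hu
    have hτs := hτ n s ⟨hs.1.le, hs.2⟩
    have hu0 : 0 < u := (hτpos n s hs.1 hs.2).trans_le hu.1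
    have h1 := hCb (x n) (hxQ n) u ⟨hu0, hu.2⟩
    have h2 := hint n u 1 hu0.le hu.2 le_rfl
    have h3 := hint n (τ n s) u hτs.1.1 hu.1 hu.2
    have h4 := hnn n _ _ hu.1
    have hVu := (hxQ n).2.2.1 u ⟨hu0, hu.2⟩
    rw [← LV_eq] at h2
    refine rpow_two_thirds_le (by have := hs.1; positivity) (by linarith) ?_
    have h5 : (1 - s) * S.LV (x n) ≤ (1 - s) * ℓ + 1 / ((n : ℝ) + 1) := by
      have h6 : (1 - s) * S.LV (x n) ≤ (1 - s) * (ℓ + 1 / ((n : ℝ) + 1)) :=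
        mul_le_mul_of_nonneg_left (hxL n) (by linarith [hs.2])
      have h7 : 0 ≤ 1 / ((n : ℝ) + 1) := by positivity
      nlinarith [hs.1]
    have h8 : s * ℓ / 2 ≤ C * ((S.E - S.V (x n u)) * Real.sqrt (S.E - S.V (x n u))) := by
      have := hτs.2
      linarith
    calc κ * s = s * ℓ / 2 / C := by rw [hκ]; field_simp
      _ ≤ _ := (div_le_iff₀' hC).2 h8
  obtain ⟨k, hk, hkb⟩ := S.exists_displacement_le
  have hdisp : ∀ s t, 0 < s → s ≤ t → t ≤ 1 → ∀ᶠ n in hyperfilter ℕ,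
      ∀ u ∈ Icc (τ n s) (τ n t), k * Real.sqrt ((κ * s) ^ (2/3 : ℝ)) * ‖x n u - x n (τ n s)‖
        ≤ (t - s) * S.LV (x n) := by
    intro s t hs hst ht
    filter_upwards [hlow s ⟨hs, hst.trans ht⟩] with n hn u hu
    have hτs := hτ n s ⟨hs.le, hst.trans ht⟩
    have hτt := hτ n t ⟨hs.le.trans hst, ht⟩
    refine (hkb Q (x n) (hxQ n) _ u _ hτs.1.1 hu.1 (hu.2.trans hτt.1.2)
      fun v hv => hn v ⟨hv.1.le, hv.2.trans (hu.2.trans hτt.1.2)⟩).trans ?_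
    have h1 := hint n _ _ hτs.1.1 hu.1 (hu.2.trans hτt.1.2)
    have h2 := hint n _ _ (hτs.1.1.trans hu.1) hu.2 hτt.1.2
    have h3 := hnn n _ _ hu.2
    linarith [hτs.2, hτt.2]
  refine ⟨γ, ?_, ⟨κ, hκ0, fun s hs => ?_, k, hk, fun s t hs hst ht => ?_⟩,
    fun s hs η hη => ?_, fun M hM => ?_⟩
  · have h1 := hγlim 1 ⟨zero_le_one, le_rfl⟩
    simp only [hτ1, (hxQ _).2.2.2] at h1
    exact tendsto_nhds_unique h1 tendsto_const_nhds
  · refine ge_of_tendsto ((hVlim s ⟨hs.1.le, hs.2⟩).const_sub S.E) ?_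
    filter_upwards [hlow s hs] with n hn
    exact hn _ ⟨le_rfl, (hτ n s ⟨hs.1.le, hs.2⟩).1.2⟩
  · have hsI : s ∈ Icc (0:ℝ) 1 := ⟨hs.le, hst.trans ht⟩
    have htI : t ∈ Icc (0:ℝ) 1 := ⟨hs.le.trans hst, ht⟩
    refine le_of_tendsto_of_tendsto
      (((hγlim t htI).sub (hγlim s hsI)).norm.const_mul _) (hLlim.const_mul (t - s)) ?_
    filter_upwards [hdisp s t hs hst ht] with n hn
    exact hn _ ⟨hτmono n s t hs.le hst ht, le_rfl⟩
  · have hsI : s ∈ Icc (0:ℝ) 1 := ⟨hs.1.le, hs.2.le⟩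
    have hm : 0 < (κ * s) ^ (2/3 : ℝ) := Real.rpow_pos_of_pos (mul_pos hκ0 hs.1) _
    have hVs : S.V (γ s) < S.E := by
      have : (κ * s) ^ (2/3 : ℝ) ≤ S.E - S.V (γ s) := by
        refine ge_of_tendsto ((hVlim s hsI).const_sub S.E) ?_
        filter_upwards [hlow s ⟨hs.1, hs.2.le⟩] with n hn
        exact hn _ ⟨le_rfl, (hτ n s hsI).1.2⟩
      linarith
    obtain ⟨ρ, hρ, hρb⟩ := S.exists_frozen_displacement_le hVs hη
    set K := k * Real.sqrt ((κ * s) ^ (2/3 : ℝ)) with hK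
    have hK0 : 0 < K := mul_pos hk (Real.sqrt_pos.2 hm)
    refine ⟨K * (ρ / 2) / (ℓ + 1), by positivity, fun t hst htr ht1 => ?_⟩
    have htI : t ∈ Icc (0:ℝ) 1 := ⟨hs.1.le.trans hst, ht1⟩
    have hc : ContinuousAt (fun v => Real.sqrt (S.jac (γ s) v)) (γ t - γ s) := by
      have h1 : ContinuousAt (fun z : Vec N × Vec N => S.jac z.1 z.2) (γ s, γ t - γ s) :=
        S.continuousOn_jac.continuousAt
          (prod_mem_nhds (S.hU.mem_nhds (S.mem_U hVs.le)) univ_mem)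
      exact (h1.comp (f := fun v : Vec N => (γ s, v)) (x := γ t - γ s)
        (by fun_prop : Continuous fun v : Vec N => (γ s, v)).continuousAt).sqrt
    refine le_of_tendsto_of_tendsto
      (hc.tendsto.comp ((hγlim t htI).sub (hγlim s hsI)))
      ((hLlim.const_mul (t - s)).const_mul (1 + η)) ?_
    have hnear : ∀ᶠ n in hyperfilter ℕ, dist (x n (τ n s)) (γ s) < ρ / 2 :=
      (hγlim s hsI).eventually (Metric.ball_mem_nhds _ (by positivity))
    have hL1 : ∀ᶠ n in hyperfilter ℕ, S.LV (x n) < ℓ + 1 :=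
      hLlim.eventually_lt_const (by linarith)
    filter_upwards [hdisp s t hs.1 hst ht1, hnear, hL1] with n hn1 hn2 hn3
    simp only [Function.comp_apply]
    rw [← hτdiff n s t hs.1.le hst ht1]
    refine hρb Q (x n) (hxQ n) _ _ (hτ n s hsI).1.1 (hτmono n s t hs.1.le hst ht1)
      (hτ n t htI).1.2 fun u hu => ?_
    have h1 := hn1 u hu
    have h2 : (t - s) * S.LV (x n) ≤ K * (ρ / 2) := by
      have h3 : t - s ≤ K * (ρ / 2) / (ℓ + 1) := by linarith
      calc (t - s) * S.LV (x n) ≤ K * (ρ / 2) / (ℓ + 1) * (ℓ + 1) := by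
            have := (hLpos n).le
            gcongr
        _ = _ := by field_simp
    have h3 : ‖x n u - x n (τ n s)‖ ≤ ρ / 2 := le_of_mul_le_mul_left (h1.trans h2) hK0
    calc dist (x n u) (γ s) ≤ dist (x n u) (x n (τ n s)) + dist (x n (τ n s)) (γ s) :=
          dist_triangle _ _ _
      _ < ρ := by rw [dist_eq_norm]; linarith
  · obtain ⟨φ, hφ, hφb⟩ := S.exists_length_lower_bound (M := M / 2) (by positivity)
    refine ⟨φ, hφ, fun s hs hMs => ?_⟩
    have hsI : s ∈ Icc (0:ℝ) 1 := ⟨hs.1.le, hs.2⟩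
    refine ge_of_tendsto (hLlim.const_mul s) ?_
    have hev : ∀ᶠ n in hyperfilter ℕ, M / 2 < S.E - S.V (x n (τ n s)) :=
      ((hVlim s hsI).const_sub S.E).eventually_const_lt (by linarith)
    filter_upwards [hev] with n hn
    rw [← (hτ n s hsI).2]
    exact hφb Q (x n) (hxQ n) _ (hτ n s hsI).1 hn.le

end Setting

lemma tendsto_slope_right {γ : ℝ → Vec N} {s : ℝ} (h : DifferentiableAt ℝ γ s) :
    Tendsto (fun t => (t - s)⁻¹ • (γ t - γ s)) (𝓝[>] s) (𝓝 (deriv γ s)) := by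
  have h1 := hasDerivAt_iff_tendsto_slope.1 h.hasDerivAt
  exact h1.mono_left (nhdsWithin_mono _ fun t ht => ne_of_gt ht)

lemma ae_differentiableAt_of_lipschitzOnWith {γ : ℝ → Vec N} {a b : ℝ} {K : NNReal}
    (h : LipschitzOnWith K γ (Icc a b)) :
    ∀ᵐ s ∂volume.restrict (Icc a b), DifferentiableAt ℝ γ s := by
  rw [← restrict_Ioo_eq_restrict_Icc, ae_restrict_iff' measurableSet_Ioo]
  filter_upwards [h.ae_differentiableWithinAt_of_mem_real] with s hs hsI
  exact (hs (Ioo_subset_Icc_self hsI)).differentiableAt (Icc_mem_nhds hsI.1 hsI.2)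

lemma integral_deriv_of_lipschitzOnWith {γ : ℝ → Vec N} {a b : ℝ} {K : NNReal} (hab : a ≤ b)
    (h : LipschitzOnWith K γ (Icc a b)) (hi : IntegrableOn (deriv γ) (Icc a b)) :
    ∫ s in a..b, deriv γ s = γ b - γ a := by
  have hd := ae_differentiableAt_of_lipschitzOnWith h
  ext i
  have hac : AbsolutelyContinuousOnInterval (fun s => γ s i) a b := by
    refine LipschitzOnWith.absolutelyContinuousOnInterval (K := K) ?_
    rw [uIcc_of_le hab]
    refine LipschitzOnWith.of_dist_le_mul fun x hx y hy => ?_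
    exact (dist_le_pi_dist (γ x) (γ y) i).trans (h.dist_le_mul x hx y hy)
  rw [Pi.sub_apply, ← hac.integral_deriv_eq_sub, intervalIntegral.integral_of_le hab,
    intervalIntegral.integral_of_le hab, ← integral_Icc_eq_integral_Ioc,
    ← integral_Icc_eq_integral_Ioc, eval_integral (fun j => Integrable.eval hi j)]
  refine integral_congr_ae ?_
  filter_upwards [hd] with s hs
  exact ((hasDerivAt_pi.1 hs.hasDerivAt) i).deriv.symm

/-- A curve on `(0,1]` whose speed is controlled by `s^(-1/3)` extends to an `H¹` curve. -/
lemma exists_H1On_extension {γ₀ : ℝ → Vec N} {C : ℝ} (hC : 0 ≤ C)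
    (h : ∀ s t, 0 < s → s ≤ t → t ≤ 1 → ‖γ₀ t - γ₀ s‖ ≤ C * s ^ (-(1/3) : ℝ) * (t - s)) :
    ∃ γ : ℝ → Vec N, H1On γ 0 1 ∧ (∀ s ∈ Ioc (0:ℝ) 1, γ s = γ₀ s) ∧
      ∀ᵐ s ∂volume.restrict (Ioo (0:ℝ) 1), DifferentiableAt ℝ γ s := by
  have hlip : ∀ a, 0 < a → LipschitzOnWith (C * a ^ (-(1/3) : ℝ)).toNNReal γ₀ (Icc a 1) := by
    intro a ha
    have hnn : 0 ≤ C * a ^ (-(1/3) : ℝ) := mul_nonneg hC (Real.rpow_nonneg ha.le _)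
    have key : ∀ s t, a ≤ s → s ≤ t → t ≤ 1 →
        ‖γ₀ t - γ₀ s‖ ≤ C * a ^ (-(1/3) : ℝ) * (t - s) := by
      intro s t has hst ht
      refine (h s t (ha.trans_le has) hst ht).trans ?_
      refine mul_le_mul_of_nonneg_right (mul_le_mul_of_nonneg_left ?_ hC) (by linarith)
      exact Real.rpow_le_rpow_of_nonpos ha has (by norm_num)
    refine LipschitzOnWith.of_dist_le_mul fun x hx y hy => ?_
    rw [Real.coe_toNNReal _ hnn, dist_eq_norm, Real.dist_eq]
    rcases le_total x y with hxy | hxy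
    · rw [norm_sub_rev, abs_sub_comm, abs_of_nonneg (by linarith)]
      exact key x y hx.1 hxy hy.2
    · rw [abs_of_nonneg (by linarith)]
      exact key y x hy.1 hxy hx.2
  have hdiff : ∀ᵐ s ∂volume.restrict (Ioo (0:ℝ) 1), DifferentiableAt ℝ γ₀ s := by
    have h1 : ∀ n : ℕ, ∀ᵐ s : ℝ, s ∈ Icc (1 / ((n : ℝ) + 1)) 1 → DifferentiableAt ℝ γ₀ s := fun n =>
      (ae_restrict_iff' measurableSet_Icc).1
        (ae_differentiableAt_of_lipschitzOnWith (hlip _ (by positivity)))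
    rw [ae_restrict_iff' measurableSet_Ioo]
    filter_upwards [ae_all_iff.2 h1] with s hs hsI
    obtain ⟨n, hn⟩ := exists_nat_one_div_lt hsI.1
    exact hs n ⟨hn.le, hsI.2.le⟩
  have hbd : ∀ s ∈ Ioo (0:ℝ) 1, ‖deriv γ₀ s‖ ≤ C * s ^ (-(1/3) : ℝ) := by
    intro s hs
    by_cases hd : DifferentiableAt ℝ γ₀ s
    · refine le_of_tendsto (tendsto_slope_right hd).norm ?_
      filter_upwards [Ioo_mem_nhdsGT hs.2] with t ht
      have h0 : 0 < t - s := by linarith [ht.1]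
      rw [norm_smul, norm_inv, Real.norm_of_nonneg h0.le, inv_mul_le_iff₀ h0, mul_comm]
      exact h s t hs.1 ht.1.le ht.2.le
    · rw [deriv_zero_of_not_differentiableAt hd, norm_zero]
      exact mul_nonneg hC (Real.rpow_nonneg hs.1.le _)
  have hint : IntegrableOn (deriv γ₀) (Ioo 0 1) := by
    have h1 : IntegrableOn (fun s : ℝ => C * s ^ (-(1/3) : ℝ)) (Ioo 0 1) := by
      have := (intervalIntegral.intervalIntegrable_rpow' (a := 0) (b := 1)
        (r := -(1/3)) (by norm_num)).const_mul C
      exact (intervalIntegrable_iff_integrableOn_Ioo_of_le zero_le_one).1 this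
    refine Integrable.mono' h1 (measurable_deriv γ₀).aestronglyMeasurable ?_
    exact (ae_restrict_iff' measurableSet_Ioo).2 (Eventually.of_forall hbd)
  have hint2 : IntegrableOn (fun s => ‖deriv γ₀ s‖ ^ 2) (Ioo 0 1) := by
    have h1 : IntegrableOn (fun s : ℝ => C ^ 2 * s ^ (-(2/3) : ℝ)) (Ioo 0 1) := by
      have := (intervalIntegral.intervalIntegrable_rpow' (a := 0) (b := 1)
        (r := -(2/3)) (by norm_num)).const_mul (C ^ 2)
      exact (intervalIntegrable_iff_integrableOn_Ioo_of_le zero_le_one).1 this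
    refine Integrable.mono' h1 ((measurable_deriv γ₀).norm.pow_const 2).aestronglyMeasurable ?_
    refine (ae_restrict_iff' measurableSet_Ioo).2 (Eventually.of_forall fun s hs => ?_)
    rw [Real.norm_of_nonneg (by positivity)]
    calc ‖deriv γ₀ s‖ ^ 2 ≤ (C * s ^ (-(1/3) : ℝ)) ^ 2 := by gcongr; exact hbd s hs
      _ = C ^ 2 * s ^ (-(2/3) : ℝ) := by
        rw [mul_pow, ← Real.rpow_natCast, ← Real.rpow_natCast, ← Real.rpow_mul hs.1.le]
        norm_num
  rw [← integrableOn_Icc_iff_integrableOn_Ioo] at hint hint2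
  have hII : ∀ a b, 0 ≤ a → a ≤ b → b ≤ 1 → IntervalIntegrable (deriv γ₀) volume a b :=
    fun a b ha hab hb => (intervalIntegrable_iff_integrableOn_Icc_of_le hab).2
      (hint.mono_set (Icc_subset_Icc ha hb))
  set γ : ℝ → Vec N := fun s => γ₀ 1 - ∫ u in s..1, deriv γ₀ u with hγ
  have heq : ∀ s ∈ Ioc (0:ℝ) 1, γ s = γ₀ s := by
    intro s hs
    have := integral_deriv_of_lipschitzOnWith hs.2 (hlip s hs.1)
      (hint.mono_set (Icc_subset_Icc hs.1.le le_rfl))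
    simp [hγ, this]
  have hev : ∀ s ∈ Ioo (0:ℝ) 1, γ =ᶠ[𝓝 s] γ₀ := by
    intro s hs
    filter_upwards [Ioo_mem_nhds hs.1 hs.2] with t ht
    exact heq t ⟨ht.1, ht.2.le⟩
  refine ⟨γ, H1On_of_primitive (f := deriv γ₀) ?_ hint hint2 fun t ht => ?_, heq, ?_⟩
  · rw [← restrict_Ioo_eq_restrict_Icc, ae_restrict_iff' measurableSet_Ioo]
    exact Eventually.of_forall fun s hs => (hev s hs).deriv_eq
  · have := intervalIntegral.integral_add_adjacent_intervals (hII 0 t le_rfl ht.1 ht.2)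
      (hII t 1 ht.1 ht.2 le_rfl)
    simp only [hγ, ← this]
    abel
  · rw [ae_restrict_iff' measurableSet_Ioo] at hdiff ⊢
    filter_upwards [hdiff] with s hs hsI
    exact (hev s hsI).differentiableAt_iff.2 (hs hsI)

namespace Setting

variable {S : Setting N}

/-- The limit curve is admissible, with Jacobi speed bounded by `d_V(Q)`. -/
lemma exists_inXQ_jac_le {Q : Vec N} (hQ : S.V Q < S.E) : ∃ γ, S.InXQ Q γ ∧
    (∀ᵐ s ∂volume.restrict (Ioo (0:ℝ) 1), DifferentiableAt ℝ γ s) ∧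
    ∀ᵐ s ∂volume.restrict (Ioo (0:ℝ) 1), S.jac (γ s) (deriv γ s) ≤ S.dV Q ^ 2 := by
  obtain ⟨γ₀, hγ1, ⟨κ, hκ, hlow, k, hk, hdisp⟩, hfro, hlen⟩ := exists_limit_curve hQ
  have hℓ := dV_pos hQ
  set ℓ := S.dV Q
  set C := ℓ / (k * Real.sqrt (κ ^ (2/3 : ℝ))) with hC
  have hκ' : 0 < Real.sqrt (κ ^ (2/3 : ℝ)) := Real.sqrt_pos.2 (Real.rpow_pos_of_pos hκ _)
  have hbound : ∀ s t, 0 < s → s ≤ t → t ≤ 1 →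
      ‖γ₀ t - γ₀ s‖ ≤ C * s ^ (-(1/3) : ℝ) * (t - s) := by
    intro s t hs hst ht
    have h1 := hdisp s t hs hst ht
    have h2 : Real.sqrt ((κ * s) ^ (2/3 : ℝ)) = Real.sqrt (κ ^ (2/3 : ℝ)) * s ^ (1/3 : ℝ) := by
      rw [Real.mul_rpow hκ.le hs.le, Real.sqrt_mul (Real.rpow_nonneg hκ.le _)]
      congr 1
      rw [Real.sqrt_eq_rpow, ← Real.rpow_mul hs.le]
      norm_num
    have hs3 : 0 < s ^ (1/3 : ℝ) := Real.rpow_pos_of_pos hs _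
    rw [h2] at h1
    rw [Real.rpow_neg hs.le, hC]
    have h3 : ℓ / (k * Real.sqrt (κ ^ (2/3 : ℝ))) * (s ^ (1/3 : ℝ))⁻¹ * (t - s)
        = (t - s) * ℓ / (k * (Real.sqrt (κ ^ (2/3 : ℝ)) * s ^ (1/3 : ℝ))) := by
      field_simp
    rw [h3, le_div_iff₀ (by positivity), mul_comm]
    exact h1
  obtain ⟨γ, hH1, heq, hdiff⟩ := exists_H1On_extension (by positivity) hbound
  have hVlt : ∀ s ∈ Ioc (0:ℝ) 1, S.V (γ s) < S.E := by
    intro s hs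
    rw [heq s hs]
    have := hlow s hs
    have h2 : 0 < (κ * s) ^ (2/3 : ℝ) := Real.rpow_pos_of_pos (mul_pos hκ hs.1) _
    linarith
  have hlim0 : Tendsto γ (𝓝[>] 0) (𝓝 (γ 0)) := by
    rw [← nhdsWithin_Ioc_eq_nhdsGT (zero_lt_one (α := ℝ))]
    exact (hH1.1 0 ⟨le_rfl, zero_le_one⟩).mono Ioc_subset_Icc_self
  have hle0 : S.V (γ 0) ≤ S.E := by
    have : γ 0 ∈ {x : Vec N | S.V x ≤ S.E} := by
      refine S.hcomp.isClosed.mem_of_tendsto hlim0 ?_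
      filter_upwards [Ioc_mem_nhdsGT (zero_lt_one (α := ℝ))] with s hs
      exact (hVlt s hs).le
    exact this
  have hV0 : S.V (γ 0) = S.E := by
    by_contra hne
    have hlt : S.V (γ 0) < S.E := lt_of_le_of_ne hle0 hne
    obtain ⟨φ, hφ, hφb⟩ := hlen ((S.E - S.V (γ 0)) / 2) (by linarith)
    have hVl : Tendsto (fun s => S.V (γ s)) (𝓝[>] 0) (𝓝 (S.V (γ 0))) :=
      (S.differentiableAt_V (S.mem_U hle0)).continuousAt.tendsto.comp hlim0
    have hid : Tendsto (fun s : ℝ => s * ℓ) (𝓝[>] 0) (𝓝 0) := by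
      have : Tendsto (fun s : ℝ => s * ℓ) (𝓝 0) (𝓝 (0 * ℓ)) :=
        (continuous_id.mul continuous_const).tendsto 0
      rw [zero_mul] at this
      exact this.mono_left nhdsWithin_le_nhds
    have := (((hVl.eventually_lt_const (u := S.V (γ 0) + (S.E - S.V (γ 0)) / 2)
      (by linarith)).and (hid.eventually_lt_const hφ)).and
      (Ioc_mem_nhdsGT (zero_lt_one (α := ℝ)))).exists
    obtain ⟨s, ⟨h1, h2⟩, h3⟩ := this
    rw [heq s h3] at h1
    have := hφb s h3 (by linarith)
    linarith
  refine ⟨γ, ⟨hH1, hV0, hVlt, (heq 1 ⟨zero_lt_one, le_rfl⟩).trans hγ1⟩, hdiff, ?_⟩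
  rw [ae_restrict_iff' measurableSet_Ioo] at hdiff ⊢
  filter_upwards [hdiff] with s hs hsI
  have hsU := S.mem_U (hVlt s ⟨hsI.1, hsI.2.le⟩).le
  have hslope := tendsto_slope_right (hs hsI)
  have hj : Tendsto (fun t => Real.sqrt (S.jac (γ s) ((t - s)⁻¹ • (γ t - γ s)))) (𝓝[>] s)
      (𝓝 (Real.sqrt (S.jac (γ s) (deriv γ s)))) := by
    have h1 : ContinuousAt (fun z : Vec N × Vec N => S.jac z.1 z.2) (γ s, deriv γ s) :=
      S.continuousOn_jac.continuousAt (prod_mem_nhds (S.hU.mem_nhds hsU) univ_mem)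
    exact (h1.tendsto.comp (tendsto_const_nhds.prodMk_nhds hslope)).sqrt
  have hη : ∀ η > 0, Real.sqrt (S.jac (γ s) (deriv γ s)) ≤ (1 + η) * ℓ := by
    intro η hη
    obtain ⟨r, hr, hrb⟩ := hfro s hsI η hη
    refine le_of_tendsto hj ?_
    filter_upwards [Ioo_mem_nhdsGT hsI.2, Ioo_mem_nhdsGT (show s < s + r by linarith)]
      with t ht ht'
    have h0 : 0 < t - s := by linarith [ht.1]
    have h1 := hrb t ht.1.le ht'.2 ht.2.le
    rw [← heq s ⟨hsI.1, hsI.2.le⟩, ← heq t ⟨hsI.1.trans ht.1, ht.2.le⟩] at h1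
    rw [S.jac_smul, Real.sqrt_mul (by positivity), Real.sqrt_sq (by positivity),
      inv_mul_le_iff₀ h0]
    linarith
  have hle : Real.sqrt (S.jac (γ s) (deriv γ s)) ≤ ℓ := by
    refine le_of_forall_pos_le_add fun ε hε => ?_
    have := hη (ε / ℓ) (by positivity)
    rwa [add_mul, one_mul, div_mul_cancel₀ _ hℓ.ne'] at this
  exact (Real.sqrt_le_left hℓ.le).1 hle

end Setting

namespace Setting

variable (S : Setting N)

/-- The differential of `(x, v) ↦ jac x v` at `(x, v)` in the direction `(y, w)`. -/
def jacDeriv (x v y w : Vec N) : ℝ :=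
  (1/2) * (-fderiv ℝ S.V x y) * S.prod x v v
    + (1/2) * (S.E - S.V x) * ∑ i, ∑ j, fderiv ℝ (fun z => S.g z i j) x y * v i * v j
    + (S.E - S.V x) * S.prod x v w

lemma continuousOn_fderiv_g (i j : Fin N) :
    ContinuousOn (fun x => fderiv ℝ (fun z => S.g z i j) x) S.U :=
  (S.hgC i j).continuousOn_fderiv_of_isOpen S.hU (by norm_num)

lemma hasDerivAt_comp_line {f : Vec N → ℝ} {x y : Vec N} {ε : ℝ}
    (hf : DifferentiableAt ℝ f (x + ε • y)) :
    HasDerivAt (fun ε : ℝ => f (x + ε • y)) (fderiv ℝ f (x + ε • y) y) ε := by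
  have h1 : HasDerivAt (fun ε : ℝ => x + ε • y) y ε := by
    simpa using ((hasDerivAt_id ε).smul_const y).const_add x
  exact hf.hasFDerivAt.comp_hasDerivAt ε h1

lemma hasDerivAt_jac {x v y w : Vec N} {ε : ℝ} (hx : x + ε • y ∈ S.U) :
    HasDerivAt (fun ε : ℝ => S.jac (x + ε • y) (v + ε • w))
      (S.jacDeriv (x + ε • y) (v + ε • w) y w) ε := by
  have hV := hasDerivAt_comp_line (S.differentiableAt_V hx)
  have hg := fun i j => hasDerivAt_comp_line (S.differentiableAt_g hx i j)
  have hv : ∀ i, HasDerivAt (fun ε : ℝ => (v + ε • w) i) (w i) ε := by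
    intro i
    simpa using ((hasDerivAt_id ε).mul_const (w i)).const_add (v i)
  have hsum : HasDerivAt (fun ε : ℝ => S.prod (x + ε • y) (v + ε • w) (v + ε • w))
      (∑ i, ∑ j, ((fderiv ℝ (fun z => S.g z i j) (x + ε • y) y * (v + ε • w) i
        + S.g (x + ε • y) i j * w i) * (v + ε • w) j
        + S.g (x + ε • y) i j * (v + ε • w) i * w j)) ε := by
    unfold prod gP
    exact HasDerivAt.fun_sum fun i _ => HasDerivAt.fun_sum fun j _ =>
      ((hg i j).fun_mul (hv i)).fun_mul (hv j)
  have h := ((hV.const_sub S.E).const_mul (1/2)).mul hsum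
  refine h.congr_deriv ?_
  have h1 : ∑ i, ∑ j, S.g (x + ε • y) i j * w i * (v + ε • w) j
      = S.prod (x + ε • y) (v + ε • w) w := S.prod_comm hx _ _
  have h2 : ∑ i, ∑ j, S.g (x + ε • y) i j * (v + ε • w) i * w j
      = S.prod (x + ε • y) (v + ε • w) w := rfl
  simp only [add_mul, Finset.sum_add_distrib, h1, h2, jacDeriv]
  ring

lemma jacDeriv_add_smul (x v y₁ w₁ y₂ w₂ : Vec N) (a b : ℝ) :
    S.jacDeriv x v (a • y₁ + b • y₂) (a • w₁ + b • w₂)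
      = a * S.jacDeriv x v y₁ w₁ + b * S.jacDeriv x v y₂ w₂ := by
  have h : ∀ i j, fderiv ℝ (fun z => S.g z i j) x (a • y₁ + b • y₂) * v i * v j
      = a * (fderiv ℝ (fun z => S.g z i j) x y₁ * v i * v j)
        + b * (fderiv ℝ (fun z => S.g z i j) x y₂ * v i * v j) := by
    intro i j
    rw [map_add, map_smul, map_smul, smul_eq_mul, smul_eq_mul]
    ring
  have hs : ∑ i, ∑ j, fderiv ℝ (fun z => S.g z i j) x (a • y₁ + b • y₂) * v i * v j
      = a * (∑ i, ∑ j, fderiv ℝ (fun z => S.g z i j) x y₁ * v i * v j)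
        + b * ∑ i, ∑ j, fderiv ℝ (fun z => S.g z i j) x y₂ * v i * v j := by
    simp only [h, Finset.sum_add_distrib, Finset.mul_sum]
  rw [jacDeriv, hs, S.prod_add_right, S.prod_smul_right, S.prod_smul_right, map_add, map_smul,
    map_smul, smul_eq_mul, smul_eq_mul, jacDeriv, jacDeriv]
  ring

lemma jacDeriv_zero (x v : Vec N) : S.jacDeriv x v 0 0 = 0 := by
  simpa using S.jacDeriv_add_smul x v 0 0 0 0 0 0

lemma jacDeriv_smul (x v y w : Vec N) (R : ℝ) :
    S.jacDeriv x (R • v) y (R • w) = R ^ 2 * S.jacDeriv x v y w := by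
  have h1 : ∀ u z : Vec N, S.prod x (R • u) (R • z) = R ^ 2 * S.prod x u z := by
    intro u z
    simp only [prod, gP, Finset.mul_sum, Pi.smul_apply, smul_eq_mul]
    exact Finset.sum_congr rfl fun i _ => Finset.sum_congr rfl fun j _ => by ring
  have h2 : ∑ i, ∑ j, fderiv ℝ (fun z => S.g z i j) x y * (R • v) i * (R • v) j
      = R ^ 2 * ∑ i, ∑ j, fderiv ℝ (fun z => S.g z i j) x y * v i * v j := by
    simp only [Finset.mul_sum, Pi.smul_apply, smul_eq_mul]
    exact Finset.sum_congr rfl fun i _ => Finset.sum_congr rfl fun j _ => by ring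
  simp only [jacDeriv, h1, h2]
  ring

lemma continuousOn_jacDeriv :
    ContinuousOn (fun z : Vec N × Vec N × Vec N × Vec N => S.jacDeriv z.1 z.2.1 z.2.2.1 z.2.2.2)
      (S.U ×ˢ univ) := by
  have h1 : MapsTo (fun z : Vec N × Vec N × Vec N × Vec N => z.1) (S.U ×ˢ univ) S.U :=
    fun z hz => hz.1
  have hV : ContinuousOn (fun z : Vec N × Vec N × Vec N × Vec N => S.V z.1) (S.U ×ˢ univ) :=
    S.hVC.continuousOn.comp continuous_fst.continuousOn h1
  have hdV : ContinuousOn (fun z : Vec N × Vec N × Vec N × Vec N => fderiv ℝ S.V z.1 z.2.2.1)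
      (S.U ×ˢ univ) :=
    (S.continuousOn_fderiv_V.comp continuous_fst.continuousOn h1).clm_apply (by fun_prop)
  have hdg : ∀ i j, ContinuousOn (fun z : Vec N × Vec N × Vec N × Vec N =>
      fderiv ℝ (fun y => S.g y i j) z.1 z.2.2.1) (S.U ×ˢ univ) := fun i j =>
    ((S.continuousOn_fderiv_g i j).comp continuous_fst.continuousOn h1).clm_apply (by fun_prop)
  have hp1 : ContinuousOn (fun z : Vec N × Vec N × Vec N × Vec N => S.prod z.1 z.2.1 z.2.1)
      (S.U ×ˢ univ) :=
    S.continuousOn_prod.comp (f := fun z : Vec N × Vec N × Vec N × Vec N => (z.1, z.2.1, z.2.1))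
      (by fun_prop) fun z hz => ⟨hz.1, mem_univ _⟩
  have hp2 : ContinuousOn (fun z : Vec N × Vec N × Vec N × Vec N => S.prod z.1 z.2.1 z.2.2.2)
      (S.U ×ˢ univ) :=
    S.continuousOn_prod.comp (f := fun z : Vec N × Vec N × Vec N × Vec N => (z.1, z.2.1, z.2.2.2))
      (by fun_prop) fun z hz => ⟨hz.1, mem_univ _⟩
  have hsum : ContinuousOn (fun z : Vec N × Vec N × Vec N × Vec N => ∑ i, ∑ j,
      fderiv ℝ (fun y => S.g y i j) z.1 z.2.2.1 * z.2.1 i * z.2.1 j) (S.U ×ˢ univ) :=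
    continuousOn_finsetSum _ fun i _ => continuousOn_finsetSum _ fun j _ =>
      ((hdg i j).mul (by fun_prop)).mul (by fun_prop)
  unfold jacDeriv
  fun_prop

lemma exists_abs_jacDeriv_le {K : Set (Vec N)} (hK : IsCompact K) (hKU : K ⊆ S.U) (M : ℝ) :
    ∃ C, ∀ x ∈ K, ∀ v y w : Vec N, ∀ R > 0, ‖v‖ ≤ R → ‖w‖ ≤ R → ‖y‖ ≤ M →
      |S.jacDeriv x v y w| ≤ C * R ^ 2 := by
  have hc : IsCompact (K ×ˢ (Metric.closedBall (0 : Vec N) 1) ×ˢ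
      (Metric.closedBall (0 : Vec N) M) ×ˢ (Metric.closedBall (0 : Vec N) 1)) :=
    hK.prod ((isCompact_closedBall _ _).prod
      ((isCompact_closedBall _ _).prod (isCompact_closedBall _ _)))
  obtain ⟨C, hC⟩ := hc.exists_bound_of_continuousOn
    (S.continuousOn_jacDeriv.mono fun z hz => ⟨hKU hz.1, mem_univ _⟩)
  refine ⟨C, fun x hx v y w R hR hv hw hy => ?_⟩
  have hn : ∀ u : Vec N, ‖u‖ ≤ R → R⁻¹ • u ∈ Metric.closedBall (0 : Vec N) 1 := by
    intro u hu
    rw [mem_closedBall_zero_iff, norm_smul, norm_inv, Real.norm_of_nonneg hR.le,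
      inv_mul_le_iff₀ hR, mul_one]
    exact hu
  have h := hC (x, R⁻¹ • v, y, R⁻¹ • w) ⟨hx, hn v hv, mem_closedBall_zero_iff.2 hy, hn w hw⟩
  have h2 := S.jacDeriv_smul x (R⁻¹ • v) y (R⁻¹ • w) R
  rw [smul_inv_smul₀ hR.ne', smul_inv_smul₀ hR.ne'] at h2
  rw [h2, abs_mul, abs_of_nonneg (by positivity : (0:ℝ) ≤ R ^ 2), mul_comm]
  exact mul_le_mul_of_nonneg_right h (by positivity)

lemma aestronglyMeasurable_jacDeriv {I : Set ℝ} (hI : MeasurableSet I) {x y v w : ℝ → Vec N}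
    (hx : ContinuousOn x I) (hxU : ∀ s ∈ I, x s ∈ S.U)
    (hv : AEStronglyMeasurable v (volume.restrict I))
    (hy : AEStronglyMeasurable y (volume.restrict I))
    (hw : AEStronglyMeasurable w (volume.restrict I)) :
    AEStronglyMeasurable (fun s => S.jacDeriv (x s) (v s) (y s) (w s)) (volume.restrict I) := by
  have happ : ∀ f : Vec N → Vec N →L[ℝ] ℝ, ContinuousOn f S.U →
      AEStronglyMeasurable (fun s => f (x s) (y s)) (volume.restrict I) := fun f hf =>
    isBoundedBilinearMap_apply.continuous.comp_aestronglyMeasurable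
      (((hf.comp hx hxU).aestronglyMeasurable hI).prodMk hy)
  have hV : AEStronglyMeasurable (fun s => S.E - S.V (x s)) (volume.restrict I) :=
    (continuousOn_const.sub (S.hVC.continuousOn.comp hx hxU)).aestronglyMeasurable hI
  have hvi : ∀ i, AEStronglyMeasurable (fun s => v s i) (volume.restrict I) := fun i =>
    (continuous_apply i).comp_aestronglyMeasurable hv
  refine AEStronglyMeasurable.add (AEStronglyMeasurable.add ?_ ?_) ?_
  · exact ((happ _ S.continuousOn_fderiv_V).neg.const_mul _).mul
      (S.aestronglyMeasurable_prod hI hx hxU hv hv)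
  · refine (hV.const_mul _).mul (Finset.aestronglyMeasurable_fun_sum _ fun i _ =>
      Finset.aestronglyMeasurable_fun_sum _ fun j _ => ?_)
    exact ((happ _ (S.continuousOn_fderiv_g i j)).mul (hvi i)).mul (hvi j)
  · exact hV.mul (S.aestronglyMeasurable_prod hI hx hxU hv hw)

end Setting

namespace Setting

variable {S : Setting N}

lemma InXQ.integrableOn_jac {Q : Vec N} {x : ℝ → Vec N} (hx : S.InXQ Q x) :
    IntegrableOn (fun s => S.jac (x s) (deriv x s)) (Icc 0 1) := by
  obtain ⟨l, hl, L, hL, hb⟩ := S.exists_prod_bounds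
  obtain ⟨B, hB⟩ := (S.hcomp.image_of_continuousOn
    ((continuousOn_const (c := S.E)).sub (S.hVC.continuousOn.mono S.hsub))).isBounded.exists_norm_le
  have hB0 : 0 ≤ B := (norm_nonneg _).trans (hB _ ⟨x 0, hx.2.1.le, rfl⟩)
  refine Integrable.mono' (hx.1.2.2.1.const_mul (1/2 * B * L))
    (S.aestronglyMeasurable_jac measurableSet_Icc hx.1.1 (fun s hs => S.mem_U (hx.le hs))
      (aestronglyMeasurable_deriv x _)) ?_
  refine (ae_restrict_iff' measurableSet_Icc).2 (Eventually.of_forall fun s hs => ?_)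
  rw [Real.norm_of_nonneg (S.jac_nonneg (hx.le hs) _), jac]
  have h1 : S.E - S.V (x s) ≤ B := (le_abs_self _).trans (hB _ ⟨x s, hx.le hs, rfl⟩)
  have h2 := (hb (x s) (hx.le hs) (deriv x s)).2
  have h3 := S.prod_self_nonneg (S.mem_U (hx.le hs)) (deriv x s)
  calc 1/2 * (S.E - S.V (x s)) * S.prod (x s) (deriv x s) (deriv x s)
      ≤ 1/2 * B * (L * ‖deriv x s‖ ^ 2) := by gcongr
    _ = _ := by ring

lemma InXQ.sq_dV_le {Q : Vec N} (hQ : S.V Q < S.E) {x : ℝ → Vec N} (hx : S.InXQ Q x) :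
    S.dV Q ^ 2 ≤ ∫ s in (0:ℝ)..1, S.jac (x s) (deriv x s) := by
  have hℓ := dV_pos hQ
  have hint : IntervalIntegrable (fun s => S.jac (x s) (deriv x s)) volume 0 1 :=
    (intervalIntegrable_iff_integrableOn_Icc_of_le zero_le_one).2 hx.integrableOn_jac
  have h1 : S.LV x ≤ ∫ s in (0:ℝ)..1, (S.jac (x s) (deriv x s) + S.dV Q ^ 2) / (2 * S.dV Q) := by
    rw [LV_eq]
    refine intervalIntegral.integral_mono_on zero_le_one
      (hx.intervalIntegrable_speed le_rfl zero_le_one le_rfl)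
      ((hint.add intervalIntegrable_const).div_const _) fun s hs => ?_
    have h2 := Real.sq_sqrt (S.jac_nonneg (hx.le hs) (deriv x s))
    rw [le_div_iff₀ (by positivity)]
    change Real.sqrt _ * _ ≤ _
    nlinarith [sq_nonneg (Real.sqrt (S.jac (x s) (deriv x s)) - S.dV Q)]
  rw [intervalIntegral.integral_div, intervalIntegral.integral_add hint intervalIntegrable_const,
    intervalIntegral.integral_const, le_div_iff₀ (by positivity)] at h1
  have h3 := mul_le_mul_of_nonneg_right hx.dV_le (by positivity : 0 ≤ 2 * S.dV Q)
  simp only [sub_zero, one_smul] at h1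
  nlinarith

/-- Small compactly supported perturbations of an admissible curve are admissible. -/
lemma InXQ.add_smul {Q : Vec N} {γ ξ : ℝ → Vec N} (hγ : S.InXQ Q γ)
    (hd : ∀ᵐ s ∂volume.restrict (Ioo (0:ℝ) 1), DifferentiableAt ℝ γ s)
    (hξ : ContDiff ℝ 1 ξ) (hsupp : tsupport ξ ⊆ Ioo 0 1) {ε : ℝ}
    (hwell : ∀ s ∈ tsupport ξ, S.V (γ s + ε • ξ s) < S.E) :
    S.InXQ Q (fun s => γ s + ε • ξ s) ∧ ∀ᵐ s ∂volume.restrict (Icc (0:ℝ) 1),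
      deriv (fun s => γ s + ε • ξ s) s = deriv γ s + ε • deriv ξ s := by
  have hξd : Continuous (deriv ξ) := hξ.continuous_deriv le_rfl
  have hξe : Continuous (fun s => ε • deriv ξ s) := hξd.const_smul ε
  have hout : ∀ s, s ∉ tsupport ξ → ξ s = 0 := fun s hs => image_eq_zero_of_notMem_tsupport hs
  have hae : ∀ᵐ s ∂volume.restrict (Icc (0:ℝ) 1),
      deriv (fun s => γ s + ε • ξ s) s = deriv γ s + ε • deriv ξ s := by
    rw [← restrict_Ioo_eq_restrict_Icc]
    filter_upwards [hd] with s hs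
    exact (hs.hasDerivAt.add
      ((hξ.differentiable (by norm_num) s).hasDerivAt.const_smul ε)).deriv
  obtain ⟨M, hM⟩ := isCompact_Icc.exists_bound_of_continuousOn (s := Icc (0:ℝ) 1)
    hξe.continuousOn
  have h0 : (0:ℝ) ∉ tsupport ξ := fun h => lt_irrefl _ (hsupp h).1
  have h1 : (1:ℝ) ∉ tsupport ξ := fun h => lt_irrefl _ (hsupp h).2
  have hξi : IntegrableOn (fun s => ε • deriv ξ s) (Icc 0 1) :=
    hξe.integrableOn_Icc
  refine ⟨⟨H1On_of_primitive (f := fun s => deriv γ s + ε • deriv ξ s) hae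
    (hγ.1.2.1.add hξi) ?_ fun t ht => ?_, ?_, fun s hs => ?_, ?_⟩, hae⟩
  · have hb : IntegrableOn (fun s => 2 * ‖deriv γ s‖ ^ 2 + 2 * M ^ 2) (Icc 0 1) :=
      (hγ.1.2.2.1.const_mul 2).add continuous_const.integrableOn_Icc
    refine Integrable.mono' hb (((aestronglyMeasurable_deriv γ _).add
      hξi.aestronglyMeasurable).norm.pow 2) ?_
    refine (ae_restrict_iff' measurableSet_Icc).2 (Eventually.of_forall fun s hs => ?_)
    rw [Real.norm_of_nonneg (by positivity)]
    have h2 := norm_add_le (deriv γ s) (ε • deriv ξ s)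
    have h3 := hM s hs
    have h4 : ‖deriv γ s + ε • deriv ξ s‖ ^ 2 ≤ (‖deriv γ s‖ + M) ^ 2 := by
      gcongr
      linarith
    nlinarith [sq_nonneg (‖deriv γ s‖ - M)]
  · have h2 : ∫ s in (0:ℝ)..t, deriv ξ s = ξ t - ξ 0 :=
      intervalIntegral.integral_deriv_eq_sub
        (fun s _ => hξ.differentiable (by norm_num) s) (hξd.intervalIntegrable _ _)
    have h3 := hγ.1.2.2.2 t ht
    rw [intervalIntegral.integral_add (hγ.intervalIntegrable_deriv le_rfl ht.1 ht.2)
      (hξe.intervalIntegrable _ _), intervalIntegral.integral_smul, h2]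
    simp only [smul_sub]
    nth_rewrite 1 [h3]
    abel
  · simpa [hout 0 h0] using hγ.2.1
  · by_cases hs' : s ∈ tsupport ξ
    · exact hwell s hs'
    · simpa [hout s hs'] using hγ.2.2.1 s hs
  · simpa [hout 1 h1] using hγ.2.2.2

/-- The first variation of the energy vanishes along the limit curve. -/
lemma InXQ.first_variation {Q : Vec N} (hQ : S.V Q < S.E) {γ : ℝ → Vec N} (hγ : S.InXQ Q γ)
    (hd : ∀ᵐ s ∂volume.restrict (Ioo (0:ℝ) 1), DifferentiableAt ℝ γ s)
    (hjac : ∀ᵐ s ∂volume.restrict (Ioo (0:ℝ) 1), S.jac (γ s) (deriv γ s) ≤ S.dV Q ^ 2)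
    {ξ : ℝ → Vec N} (hξ : ContDiff ℝ 1 ξ) (hsupp : tsupport ξ ⊆ Ioo 0 1) :
    IntervalIntegrable (fun s => S.jacDeriv (γ s) (deriv γ s) (ξ s) (deriv ξ s)) volume 0 1 ∧
      ∫ s in (0:ℝ)..1, S.jacDeriv (γ s) (deriv γ s) (ξ s) (deriv ξ s) = 0 := by
  have hcomp : IsCompact (tsupport ξ) :=
    isCompact_Icc.of_isClosed_subset (isClosed_tsupport ξ) (hsupp.trans Ioo_subset_Icc_self)
  have hξc : Continuous ξ := hξ.continuous
  have hξd : Continuous (deriv ξ) := hξ.continuous_deriv le_rfl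
  obtain ⟨M₁, hM₁⟩ := hcomp.exists_bound_of_continuousOn hξc.continuousOn
  obtain ⟨M₂, hM₂⟩ := hcomp.exists_bound_of_continuousOn hξd.continuousOn
  set M := max 1 (max M₁ M₂) with hM
  have hMpos : 0 < M := lt_of_lt_of_le one_pos (le_max_left _ _)
  have hMξ : ∀ s ∈ tsupport ξ, ‖ξ s‖ ≤ M := fun s hs =>
    (hM₁ s hs).trans ((le_max_left _ _).trans (le_max_right _ _))
  have hMξ' : ∀ s ∈ tsupport ξ, ‖deriv ξ s‖ ≤ M := fun s hs =>
    (hM₂ s hs).trans ((le_max_right _ _).trans (le_max_right _ _))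
  have hout : ∀ s, s ∉ tsupport ξ → ξ s = 0 := fun s hs => image_eq_zero_of_notMem_tsupport hs
  have hout' : ∀ s, s ∉ tsupport ξ → deriv ξ s = 0 := fun s hs =>
    image_eq_zero_of_notMem_tsupport fun h => hs (tsupport_deriv_subset h)
  have hγK : IsCompact (γ '' tsupport ξ) :=
    hcomp.image_of_continuousOn (hγ.1.1.mono (hsupp.trans Ioo_subset_Icc_self))
  have hγW : γ '' tsupport ξ ⊆ {x | S.V x < S.E} := by
    rintro _ ⟨s, hs, rfl⟩
    have : S.V (γ s) < S.E := hγ.2.2.1 s ⟨(hsupp hs).1, (hsupp hs).2.le⟩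
    exact this
  obtain ⟨δ, hδ, hδW⟩ := hγK.exists_cthickening_subset_open S.isOpen_well hγW
  set K := Metric.cthickening δ (γ '' tsupport ξ)
  have hKc : IsCompact K := hγK.cthickening
  have hKU : K ⊆ S.U := fun x hx => S.mem_U (le_of_lt (hδW hx))
  set r := min 1 (δ / M) with hr
  have hr0 : 0 < r := lt_min one_pos (by positivity)
  have hmemK : ∀ ε ∈ Metric.ball (0:ℝ) r, ∀ s ∈ tsupport ξ, γ s + ε • ξ s ∈ K := by
    intro ε hε s hs
    rw [mem_ball_zero_iff] at hε
    refine Metric.mem_cthickening_of_dist_le _ (γ s) _ _ ⟨s, hs, rfl⟩ ?_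
    rw [dist_self_add_left, norm_smul]
    calc ‖ε‖ * ‖ξ s‖ ≤ δ / M * M := by
          gcongr
          · exact hε.le.trans (min_le_right _ _)
          · exact hMξ s hs
      _ = δ := by field_simp
  have hadm : ∀ ε ∈ Metric.ball (0:ℝ) r, S.InXQ Q (fun s => γ s + ε • ξ s) ∧
      ∀ᵐ s ∂volume.restrict (Icc (0:ℝ) 1),
      deriv (fun s => γ s + ε • ξ s) s = deriv γ s + ε • deriv ξ s := fun ε hε =>
    hγ.add_smul hd hξ hsupp fun s hs => hδW (hmemK ε hε s hs)
  have hU : ∀ ε ∈ Metric.ball (0:ℝ) r, ∀ s ∈ Icc (0:ℝ) 1, γ s + ε • ξ s ∈ S.U :=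
    fun ε hε s hs => S.mem_U ((hadm ε hε).1.le hs)
  set F : ℝ → ℝ → ℝ := fun ε s => S.jac (γ s + ε • ξ s) (deriv γ s + ε • deriv ξ s) with hF
  set F' : ℝ → ℝ → ℝ := fun ε s =>
    S.jacDeriv (γ s + ε • ξ s) (deriv γ s + ε • deriv ξ s) (ξ s) (deriv ξ s) with hF'
  have h0r : (0:ℝ) ∈ Metric.ball (0:ℝ) r := Metric.mem_ball_self hr0
  have hFint : ∀ ε ∈ Metric.ball (0:ℝ) r, IntegrableOn (F ε) (Icc 0 1) := by
    intro ε hε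
    refine (hadm ε hε).1.integrableOn_jac.congr ?_
    filter_upwards [(hadm ε hε).2] with s hs
    rw [hs]
  have hFle : ∀ ε ∈ Metric.ball (0:ℝ) r, S.dV Q ^ 2 ≤ ∫ s in Icc (0:ℝ) 1, F ε s := by
    intro ε hε
    refine ((hadm ε hε).1.sq_dV_le hQ).trans_eq ?_
    rw [intervalIntegral.integral_of_le zero_le_one, ← integral_Icc_eq_integral_Ioc]
    refine integral_congr_ae ?_
    filter_upwards [(hadm ε hε).2] with s hs
    rw [hs]
  have hF0 : ∫ s in Icc (0:ℝ) 1, F 0 s ≤ S.dV Q ^ 2 := by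
    have h1 : ∫ s in Icc (0:ℝ) 1, F 0 s ≤ ∫ s in Icc (0:ℝ) 1, S.dV Q ^ 2 := by
      refine integral_mono_ae (hFint 0 h0r) continuous_const.integrableOn_Icc ?_
      rw [← restrict_Ioo_eq_restrict_Icc]
      filter_upwards [hjac] with s hs
      simpa [hF] using hs
    simpa using h1
  have hmin : IsLocalMin (fun ε => ∫ s in Icc (0:ℝ) 1, F ε s) 0 := by
    filter_upwards [Metric.ball_mem_nhds (0:ℝ) hr0] with ε hε
    exact hF0.trans (hFle ε hε)
  obtain ⟨C, hC⟩ := S.exists_abs_jacDeriv_le hKc hKU M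
  have hC' : ∀ s ∈ tsupport ξ, ∀ ε ∈ Metric.ball (0:ℝ) r,
      |F' ε s| ≤ |C| * (‖deriv γ s‖ + M) ^ 2 := by
    intro s hs ε hε
    refine (hC _ (hmemK ε hε s hs) _ _ _ (‖deriv γ s‖ + M) (by positivity) ?_ ?_ ?_).trans
      (mul_le_mul_of_nonneg_right (le_abs_self C) (by positivity))
    · refine (norm_add_le _ _).trans ?_
      gcongr
      rw [norm_smul]
      rw [mem_ball_zero_iff] at hε
      calc ‖ε‖ * ‖deriv ξ s‖ ≤ 1 * M := by
            gcongr
            · exact hε.le.trans (min_le_left _ _)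
            · exact hMξ' s hs
        _ = M := one_mul M
    · exact (hMξ' s hs).trans (by linarith [norm_nonneg (deriv γ s)])
    · exact hMξ s hs
  have hmeas : AEStronglyMeasurable (deriv γ) (volume.restrict (Icc (0:ℝ) 1)) :=
    aestronglyMeasurable_deriv γ _
  have hder := hasDerivAt_integral_of_dominated_loc_of_deriv_le
    (μ := volume.restrict (Icc (0:ℝ) 1)) (F := F) (F' := F') (x₀ := 0)
    (bound := fun s => |C| * (‖deriv γ s‖ + M) ^ 2) (s := Metric.ball 0 r)
    (Metric.ball_mem_nhds 0 hr0)
    (by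
      filter_upwards [Metric.ball_mem_nhds (0:ℝ) hr0] with ε hε
      exact (hFint ε hε).aestronglyMeasurable)
    (hFint 0 h0r)
    (by
      have h := S.aestronglyMeasurable_jacDeriv measurableSet_Icc hγ.1.1
        (fun s hs => S.mem_U (hγ.le hs)) hmeas hξc.aestronglyMeasurable hξd.aestronglyMeasurable
      simpa [hF'] using h)
    (by
      refine Eventually.of_forall fun s ε hε => ?_
      by_cases hs : s ∈ tsupport ξ
      · exact hC' s hs ε hε
      · simp only [hF', hout s hs, hout' s hs, S.jacDeriv_zero, norm_zero]
        positivity)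
    (by
      refine Integrable.const_mul ?_ _
      have h1 : IntegrableOn (fun s => ‖deriv γ s‖ ^ 2 + 2 * M * ‖deriv γ s‖ + M ^ 2) (Icc 0 1) :=
        (hγ.1.2.2.1.add (hγ.1.2.1.norm.const_mul _)).add continuous_const.integrableOn_Icc
      refine h1.congr (Eventually.of_forall fun s => ?_)
      ring)
    (by
      refine (ae_restrict_iff' measurableSet_Icc).2 (Eventually.of_forall fun s hs ε hε => ?_)
      exact S.hasDerivAt_jac (hU ε hε s hs))
  have hzero := hmin.hasDerivAt_eq_zero hder.2
  have hF'0 : F' 0 = fun s => S.jacDeriv (γ s) (deriv γ s) (ξ s) (deriv ξ s) := by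
    funext s
    simp [hF']
  rw [hF'0] at hder hzero
  refine ⟨(intervalIntegrable_iff_integrableOn_Icc_of_le zero_le_one).2 hder.1, ?_⟩
  rwa [intervalIntegral.integral_of_le zero_le_one, ← integral_Icc_eq_integral_Ioc]

/-- The curve has almost everywhere constant Jacobi speed. -/
lemma InXQ.jac_eq_ae {Q : Vec N} (hQ : S.V Q < S.E) {γ : ℝ → Vec N} (hγ : S.InXQ Q γ)
    (hjac : ∀ᵐ s ∂volume.restrict (Ioo (0:ℝ) 1), S.jac (γ s) (deriv γ s) ≤ S.dV Q ^ 2) :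
    ∀ᵐ s ∂volume.restrict (Ioo (0:ℝ) 1), S.jac (γ s) (deriv γ s) = S.dV Q ^ 2 := by
  have h1 := hγ.sq_dV_le hQ
  rw [restrict_Ioo_eq_restrict_Icc] at hjac ⊢
  rw [intervalIntegral.integral_of_le zero_le_one, ← integral_Icc_eq_integral_Ioc] at h1
  have hi := hγ.integrableOn_jac
  have hc : IntegrableOn (fun _ : ℝ => S.dV Q ^ 2) (Icc 0 1) := continuous_const.integrableOn_Icc
  have h2 : ∫ s in Icc (0:ℝ) 1, (S.dV Q ^ 2 - S.jac (γ s) (deriv γ s)) = 0 := by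
    refine le_antisymm ?_ (integral_nonneg_of_ae ?_)
    · rw [integral_sub hc hi]
      simpa using h1
    · filter_upwards [hjac] with s hs
      simpa using hs
  have h3 := (integral_eq_zero_iff_of_nonneg_ae (by
    filter_upwards [hjac] with s hs
    simpa using hs) (hc.sub hi)).1 h2
  filter_upwards [h3] with s hs
  have : S.dV Q ^ 2 - S.jac (γ s) (deriv γ s) = 0 := hs
  linarith

end Setting

/-- A smooth function of vanishing mean, compactly supported in `(0,1)`, is the derivative of a
smooth function with compact support in `(0,1)`. -/
lemma exists_primitive_of_integral_eq_zero {ψ : ℝ → ℝ} (hψ : ContDiff ℝ (⊤ : ℕ∞) ψ)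
    (hs : tsupport ψ ⊆ Ioo 0 1) (h0 : ∫ s in (0:ℝ)..1, ψ s = 0) :
    ∃ φ : ℝ → ℝ, ContDiff ℝ (⊤ : ℕ∞) φ ∧ tsupport φ ⊆ Ioo 0 1 ∧ deriv φ = ψ := by
  have hc : IsCompact (tsupport ψ) :=
    isCompact_Icc.of_isClosed_subset (isClosed_tsupport ψ) (hs.trans Ioo_subset_Icc_self)
  obtain ⟨a, b, ha, hab, hb, hsub⟩ : ∃ a b : ℝ, 0 < a ∧ a ≤ b ∧ b < 1 ∧ tsupport ψ ⊆ Icc a b := by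
    rcases (tsupport ψ).eq_empty_or_nonempty with he | hne
    · exact ⟨1/2, 1/2, by norm_num, le_rfl, by norm_num, by simp [he]⟩
    · refine ⟨sInf (tsupport ψ), sSup (tsupport ψ), (hs (hc.sInf_mem hne)).1,
        csInf_le hc.bddBelow (hc.sSup_mem hne), (hs (hc.sSup_mem hne)).2,
        fun s hs => ⟨csInf_le hc.bddBelow hs, le_csSup hc.bddAbove hs⟩⟩
  have hz : ∀ s, s ∉ Icc a b → ψ s = 0 := fun s h =>
    image_eq_zero_of_notMem_tsupport fun h' => h (hsub h')
  have hψc : Continuous ψ := hψ.continuous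
  have hder : deriv (fun s => ∫ u in (0:ℝ)..s, ψ u) = ψ :=
    funext fun s => hψc.deriv_integral _ _ _
  refine ⟨fun s => ∫ u in (0:ℝ)..s, ψ u, ?_, ?_, hder⟩
  · refine contDiff_infty_iff_deriv.2 ⟨fun s => ?_, by rwa [hder]⟩
    exact (hψc.integral_hasStrictDerivAt 0 s).hasDerivAt.differentiableAt
  · refine (closure_minimal ?_ isClosed_Icc).trans (Icc_subset_Ioo ha hb)
    intro s hsne
    by_contra hsI
    apply hsne
    rcases lt_or_ge s a with hlt | hge
    · refine (intervalIntegral.integral_congr (g := fun _ => (0:ℝ)) fun u hu => hz u ?_).trans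
        (by simp)
      intro hu'
      have := hu.2
      rcases le_max_iff.1 this with h | h <;> linarith [hu'.1]
    · have hbs : b < s := by
        by_contra! h
        exact hsI ⟨hge, h⟩
      have h1 : ∫ u in s..1, ψ u = 0 := by
        refine (intervalIntegral.integral_congr (g := fun _ => (0:ℝ)) fun u hu => hz u ?_).trans
          (by simp)
        intro hu'
        have := hu.1
        rcases min_le_iff.1 this with h | h <;> linarith [hu'.2]
      have h2 := intervalIntegral.integral_add_adjacent_intervals
        (hψc.intervalIntegrable (μ := volume) 0 s) (hψc.intervalIntegrable s 1)
      show ∫ u in (0:ℝ)..s, ψ u = 0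
      linarith

lemma intervalIntegral_eq_integral_of_tsupport {f : ℝ → ℝ} (h : ∀ s, s ∉ Ioo (0:ℝ) 1 → f s = 0) :
    ∫ s in (0:ℝ)..1, f s = ∫ s, f s := by
  refine intervalIntegral.integral_eq_integral_of_support_subset fun s hs => ?_
  by_contra hc
  exact hs (h s fun h' => hc ⟨h'.1, h'.2.le⟩)

/-- The **du Bois-Reymond lemma**. -/
lemma du_bois_reymond {P R : ℝ → ℝ} (hP : IntegrableOn P (Icc 0 1)) (hR : IntegrableOn R (Icc 0 1))
    (h : ∀ φ : ℝ → ℝ, ContDiff ℝ (⊤ : ℕ∞) φ → tsupport φ ⊆ Ioo 0 1 →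
      ∫ s in (0:ℝ)..1, (P s * φ s + R s * deriv φ s) = 0) :
    ∃ c : ℝ, ∀ᵐ s ∂volume.restrict (Ioo (0:ℝ) 1), R s = c + ∫ u in (0:ℝ)..s, P u := by
  have hPi : IntervalIntegrable P volume 0 1 :=
    (intervalIntegrable_iff_integrableOn_Icc_of_le zero_le_one).2 hP
  have hRi : IntervalIntegrable R volume 0 1 :=
    (intervalIntegrable_iff_integrableOn_Icc_of_le zero_le_one).2 hR
  set A : ℝ → ℝ := fun s => ∫ u in (0:ℝ)..s, P u with hA
  have hAac : AbsolutelyContinuousOnInterval A 0 1 :=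
    hPi.absolutelyContinuousOnInterval_intervalIntegral left_mem_uIcc
  have hAc : ContinuousOn A (Icc 0 1) := by
    have := hAac.continuousOn
    rwa [uIcc_of_le zero_le_one] at this
  have hAi : IntegrableOn A (Icc 0 1) := hAc.integrableOn_Icc
  have hAii : IntervalIntegrable A volume 0 1 :=
    (intervalIntegrable_iff_integrableOn_Icc_of_le zero_le_one).2 hAi
  have hAd : ∀ᵐ s : ℝ, s ∈ uIoc (0:ℝ) 1 → deriv A s = P s := by
    filter_upwards [hPi.ae_hasDerivAt_integral] with s hs hsI
    exact (hs (uIoc_subset_uIcc hsI) 0 left_mem_uIcc).deriv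
  have hG : ∀ φ : ℝ → ℝ, ContDiff ℝ (⊤ : ℕ∞) φ → tsupport φ ⊆ Ioo 0 1 →
      ∫ s in (0:ℝ)..1, (R s - A s) * deriv φ s = 0 := by
    intro φ hφ hsφ
    have hφ1 : ContDiff ℝ 1 φ := hφ.of_le (by exact_mod_cast le_top)
    have hφd : Continuous (deriv φ) := hφ1.continuous_deriv le_rfl
    have h0 : φ 0 = 0 := image_eq_zero_of_notMem_tsupport fun h => lt_irrefl _ (hsφ h).1
    have h1 : φ 1 = 0 := image_eq_zero_of_notMem_tsupport fun h => lt_irrefl _ (hsφ h).2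
    have hp := hAac.integral_mul_deriv_eq_deriv_mul
      (hφ1.contDiffOn (s := uIcc 0 1)).absolutelyContinuousOnInterval
    have hAP : ∫ s in (0:ℝ)..1, deriv A s * φ s = ∫ s in (0:ℝ)..1, P s * φ s :=
      intervalIntegral.integral_congr_ae (by
        filter_upwards [hAd] with s hs hsI
        rw [hs hsI])
    rw [h0, h1, mul_zero, mul_zero, sub_zero, zero_sub, hAP] at hp
    have h2 := h φ hφ hsφ
    have hPφ : IntervalIntegrable (fun s => P s * φ s) volume 0 1 :=
      hPi.mul_continuousOn hφ1.continuous.continuousOn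
    have hRφ : IntervalIntegrable (fun s => R s * deriv φ s) volume 0 1 :=
      hRi.mul_continuousOn hφd.continuousOn
    have hAφ : IntervalIntegrable (fun s => A s * deriv φ s) volume 0 1 :=
      hAii.mul_continuousOn hφd.continuousOn
    rw [intervalIntegral.integral_add hPφ hRφ] at h2
    simp only [sub_mul]
    rw [intervalIntegral.integral_sub hRφ hAφ]
    linarith
  let β : ContDiffBump (1/2 : ℝ) := ⟨1/8, 1/4, by norm_num, by norm_num⟩
  set ψ₀ : ℝ → ℝ := β.normed volume with hψ₀
  have hψ₀s : ContDiff ℝ (⊤ : ℕ∞) ψ₀ := β.contDiff_normed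
  have hψ₀t : tsupport ψ₀ ⊆ Ioo 0 1 := by
    rw [hψ₀, β.tsupport_normed_eq, Real.closedBall_eq_Icc]
    refine Icc_subset_Ioo ?_ ?_ <;> norm_num [β]
  have hzero : ∀ ψ : ℝ → ℝ, tsupport ψ ⊆ Ioo 0 1 → ∀ s, s ∉ Ioo (0:ℝ) 1 → ψ s = 0 :=
    fun ψ hψ s hs => image_eq_zero_of_notMem_tsupport fun h => hs (hψ h)
  have hψ₀i : ∫ s in (0:ℝ)..1, ψ₀ s = 1 := by
    rw [intervalIntegral_eq_integral_of_tsupport (hzero _ hψ₀t)]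
    exact β.integral_normed
  set G : ℝ → ℝ := fun s => R s - A s with hGdef
  have hGi : IntervalIntegrable G volume 0 1 := hRi.sub hAii
  set c := ∫ s in (0:ℝ)..1, G s * ψ₀ s with hc
  refine ⟨c, ?_⟩
  have hae : ∀ᵐ s : ℝ, s ∈ Ioo (0:ℝ) 1 → G s - c = 0 := by
    refine isOpen_Ioo.ae_eq_zero_of_integral_contDiff_smul_eq_zero ?_ fun ψ hψ _ hsψ => ?_
    · exact (((hR.sub hAi).sub continuous_const.integrableOn_Icc).mono_set
        Ioo_subset_Icc_self).locallyIntegrableOn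
    · rw [← intervalIntegral_eq_integral_of_tsupport fun s hs => by
        rw [hzero ψ hsψ s hs, zero_smul]]
      set m := ∫ s in (0:ℝ)..1, ψ s with hm
      have hψc := hψ.continuous
      have hψ₀c := hψ₀s.continuous
      obtain ⟨φ, hφ, hsφ, hφd⟩ := exists_primitive_of_integral_eq_zero
        (ψ := fun s => ψ s - m * ψ₀ s) (hψ.sub (contDiff_const.mul hψ₀s)) (by
          refine (tsupport_sub ψ (fun s => m * ψ₀ s)).trans (union_subset hsψ ?_)
          exact (tsupport_mul_subset_right (f := fun _ => m)).trans hψ₀t) (by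
          rw [intervalIntegral.integral_sub (hψc.intervalIntegrable _ _)
            ((hψ₀c.intervalIntegrable _ _).const_mul m), intervalIntegral.integral_const_mul,
            hψ₀i, mul_one, sub_self])
      have h3 := hG φ hφ hsφ
      rw [hφd] at h3
      have h4 : ∀ s, ψ s • (G s - c) = G s * (ψ s - m * ψ₀ s) + m * (G s * ψ₀ s) - c * ψ s := by
        intro s
        rw [smul_eq_mul]
        ring
      have hi1 : IntervalIntegrable (fun s => G s * (ψ s - m * ψ₀ s)) volume 0 1 :=
        hGi.mul_continuousOn (hψc.sub (hψ₀c.const_mul m)).continuousOn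
      have hi2 : IntervalIntegrable (fun s => G s * ψ₀ s) volume 0 1 :=
        hGi.mul_continuousOn hψ₀c.continuousOn
      simp only [h4]
      rw [intervalIntegral.integral_sub (hi1.add (hi2.const_mul m))
        ((hψc.intervalIntegrable _ _).const_mul c),
        intervalIntegral.integral_add hi1 (hi2.const_mul m), intervalIntegral.integral_const_mul,
        intervalIntegral.integral_const_mul, h3, ← hc, ← hm]
      ring
  rw [ae_restrict_iff' measurableSet_Ioo]
  filter_upwards [hae] with s hs hsI
  have := hs hsI
  simp only [hGdef] at this
  linarith

namespace Setting

variable (S : Setting N)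

lemma det_g_ne_zero {x : Vec N} (hx : x ∈ S.U) : (S.g x).det ≠ 0 := by
  intro h
  obtain ⟨v, hv, hgv⟩ := Matrix.exists_mulVec_eq_zero_iff.2 h
  have h1 := S.hgpos x hx v hv
  have h2 : gP S.g x v v = v ⬝ᵥ (S.g x *ᵥ v) := by
    simp only [gP, dotProduct, mulVec, Finset.mul_sum]
    exact Finset.sum_congr rfl fun i _ => Finset.sum_congr rfl fun j _ => by ring
  rw [h2, hgv, dotProduct_zero] at h1
  exact lt_irrefl _ h1

lemma contDiffOn_det {A : Vec N → Matrix (Fin N) (Fin N) ℝ} {s : Set (Vec N)}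
    (hA : ∀ i j, ContDiffOn ℝ 3 (fun x => A x i j) s) : ContDiffOn ℝ 3 (fun x => (A x).det) s := by
  simp only [Matrix.det_apply]
  exact ContDiffOn.sum fun σ _ => (contDiffOn_prod fun i _ => hA _ _).const_smul _

lemma contDiffOn_g_inv (k j : Fin N) : ContDiffOn ℝ 3 (fun x => (S.g x)⁻¹ k j) S.U := by
  simp only [Matrix.inv_def, Matrix.smul_apply, Matrix.adjugate_apply, Ring.inverse_eq_inv',
    smul_eq_mul]
  refine ((contDiffOn_det S.hgC).inv fun x hx => S.det_g_ne_zero hx).mul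
    (contDiffOn_det fun a b => ?_)
  simp only [Matrix.updateRow_apply]
  split_ifs
  · exact contDiffOn_const
  · exact S.hgC a b

lemma prod_single (x v : Vec N) (k : Fin N) :
    S.prod x v (Pi.single k 1) = (v ᵥ* S.g x) k := by
  simp only [prod, gP, vecMul, dotProduct]
  refine Finset.sum_congr rfl fun i _ => ?_
  rw [Finset.sum_eq_single k (fun j _ hj => by simp [hj]) (by simp)]
  simp [mul_comm]

lemma eq_sum_prod_single {x : Vec N} (hx : x ∈ S.U) (v : Vec N) (k : Fin N) :
    v k = ∑ j, S.prod x v (Pi.single j 1) * (S.g x)⁻¹ j k := by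
  have h : (v ᵥ* S.g x) ᵥ* (S.g x)⁻¹ = v := by
    rw [vecMul_vecMul, Matrix.mul_nonsing_inv _ (isUnit_iff_ne_zero.2 (S.det_g_ne_zero hx)),
      vecMul_one]
  rw [← congrFun h k]
  simp only [S.prod_single]
  rfl

lemma jacDeriv_zero_left (x v w : Vec N) :
    S.jacDeriv x v 0 w = (S.E - S.V x) * S.prod x v w := by
  simp [jacDeriv]

variable {S}

lemma InXQ.integrableOn_jacDeriv {Q : Vec N} {γ : ℝ → Vec N} (hγ : S.InXQ Q γ) (y w : Vec N) :
    IntegrableOn (fun s => S.jacDeriv (γ s) (deriv γ s) y w) (Icc 0 1) := by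
  obtain ⟨C, hC⟩ := S.exists_abs_jacDeriv_le S.hcomp S.hsub ‖y‖
  have hb : IntegrableOn (fun s => (‖deriv γ s‖ + (‖w‖ + 1)) ^ 2) (Icc 0 1) := by
    have : IntegrableOn (fun s => ‖deriv γ s‖ ^ 2 + (2 * (‖w‖ + 1)) * ‖deriv γ s‖
        + (‖w‖ + 1) ^ 2) (Icc 0 1) :=
      (hγ.1.2.2.1.add (hγ.1.2.1.norm.const_mul _)).add continuous_const.integrableOn_Icc
    refine this.congr_fun (fun s _ => ?_) measurableSet_Icc
    ring
  refine Integrable.mono' (hb.const_mul C) (S.aestronglyMeasurable_jacDeriv measurableSet_Icc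
    hγ.1.1 (fun s hs => S.mem_U (hγ.le hs)) (aestronglyMeasurable_deriv γ _)
    aestronglyMeasurable_const aestronglyMeasurable_const) ?_
  refine (ae_restrict_iff' measurableSet_Icc).2 (Eventually.of_forall fun s hs => ?_)
  have h1 := norm_nonneg (deriv γ s)
  have h2 := norm_nonneg w
  exact hC _ (hγ.le hs) _ _ _ _ (by linarith) (by linarith) (by linarith) le_rfl

/-- The integrated Euler-Lagrange equation of the Jacobi energy. -/
lemma InXQ.euler_lagrange_ae {Q : Vec N} (hQ : S.V Q < S.E) {γ : ℝ → Vec N} (hγ : S.InXQ Q γ)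
    (hd : ∀ᵐ s ∂volume.restrict (Ioo (0:ℝ) 1), DifferentiableAt ℝ γ s)
    (hjac : ∀ᵐ s ∂volume.restrict (Ioo (0:ℝ) 1), S.jac (γ s) (deriv γ s) ≤ S.dV Q ^ 2)
    (k : Fin N) :
    ∃ c : ℝ, ∀ᵐ s ∂volume.restrict (Ioo (0:ℝ) 1),
      (S.E - S.V (γ s)) * S.prod (γ s) (deriv γ s) (Pi.single k 1)
        = c + ∫ u in (0:ℝ)..s, S.jacDeriv (γ u) (deriv γ u) (Pi.single k 1) 0 := by
  have h := du_bois_reymond (hγ.integrableOn_jacDeriv (Pi.single k 1) 0)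
    (hγ.integrableOn_jacDeriv 0 (Pi.single k 1)) fun φ hφ hsφ => ?_
  · simpa only [S.jacDeriv_zero_left] using h
  · have hφ1 : ContDiff ℝ 1 φ := hφ.of_le (by exact_mod_cast le_top)
    have hts : tsupport (fun s => φ s • (Pi.single k (1:ℝ) : Vec N)) ⊆ tsupport φ := by
      refine closure_mono fun s hs => ?_
      simp only [Function.mem_support] at hs ⊢
      intro hz
      simp [hz] at hs
    have h1 := (hγ.first_variation hQ hd hjac (ξ := fun s => φ s • (Pi.single k (1:ℝ) : Vec N))
      (hφ1.smul contDiff_const) (hts.trans hsφ)).2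
    refine (intervalIntegral.integral_congr fun s _ => ?_).trans h1
    have hd : deriv (fun s => φ s • (Pi.single k (1:ℝ) : Vec N)) s = deriv φ s • (Pi.single k (1:ℝ) : Vec N) :=
      (((hφ1.differentiable one_ne_zero) s).hasDerivAt.smul_const _).deriv
    have h2 := S.jacDeriv_add_smul (γ s) (deriv γ s) (Pi.single k 1) 0 0 (Pi.single k 1)
      (φ s) (deriv φ s)
    simp only [smul_zero, add_zero, zero_add] at h2
    simp only [hd, h2]
    ring

end Setting

/-- An absolutely continuous curve whose derivative agrees a.e. with a continuous function is
continuously differentiable. -/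
lemma H1On.hasDerivAt_of_ae_eq {x b : ℝ → Vec N} (hx : H1On x 0 1) (hb : ContinuousOn b (Ioo 0 1))
    (hxb : ∀ᵐ s ∂volume.restrict (Ioo (0:ℝ) 1), deriv x s = b s) {s : ℝ} (hs : s ∈ Ioo (0:ℝ) 1) :
    HasDerivAt x (b s) s := by
  have h0 : 0 < s / 2 := by linarith [hs.1]
  have hlt : s / 2 < s := by linarith [hs.1]
  have hint : IntervalIntegrable b volume (s / 2) s :=
    (hb.mono (by
      rw [uIcc_of_le hlt.le]
      exact Icc_subset_Ioo h0 hs.2)).intervalIntegrable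
  have h1 := intervalIntegral.integral_hasDerivAt_right hint
    (hb.stronglyMeasurableAtFilter isOpen_Ioo s hs) (hb.continuousAt (isOpen_Ioo.mem_nhds hs))
  refine (h1.const_add (x (s / 2))).congr_of_eventuallyEq ?_
  filter_upwards [Ioo_mem_nhds hlt hs.2] with t ht
  rw [← sub_eq_iff_eq_add', hx.sub_eq_integral h0.le ht.1.le ht.2.le]
  refine intervalIntegral.integral_congr_ae ?_
  filter_upwards [(ae_restrict_iff' measurableSet_Ioo).1 hxb] with u hu hut
  rw [uIoc_of_le ht.1.le] at hut
  exact hu ⟨h0.trans hut.1, hut.2.trans_lt ht.2⟩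

namespace Setting

variable {S : Setting N}

lemma InXQ.contDiffOn_of_euler_lagrange {Q : Vec N} {γ : ℝ → Vec N} (hγ : S.InXQ Q γ)
    {c : Fin N → ℝ} (hc : ∀ k, ∀ᵐ s ∂volume.restrict (Ioo (0:ℝ) 1),
      (S.E - S.V (γ s)) * S.prod (γ s) (deriv γ s) (Pi.single k 1)
        = c k + ∫ u in (0:ℝ)..s, S.jacDeriv (γ u) (deriv γ u) (Pi.single k 1) 0) :
    ContDiffOn ℝ 2 γ (Ioo 0 1) := by
  have hwell : ∀ s ∈ Ioo (0:ℝ) 1, S.V (γ s) < S.E := fun s hs => hγ.2.2.1 s ⟨hs.1, hs.2.le⟩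
  have hU : MapsTo γ (Ioo 0 1) S.U := fun s hs => S.mem_U (hwell s hs).le
  have hγc : ContinuousOn γ (Ioo 0 1) := hγ.1.1.mono Ioo_subset_Icc_self
  set B : Fin N → ℝ → ℝ := fun k s =>
    c k + ∫ u in (0:ℝ)..s, S.jacDeriv (γ u) (deriv γ u) (Pi.single k 1) 0 with hB
  have hPi : ∀ k, IntervalIntegrable (fun u => S.jacDeriv (γ u) (deriv γ u) (Pi.single k 1) 0)
      volume 0 1 := fun k => (intervalIntegrable_iff_integrableOn_Icc_of_le zero_le_one).2
    (hγ.integrableOn_jacDeriv _ _)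
  have hBc : ∀ k, ContinuousOn (B k) (Ioo 0 1) := by
    intro k
    have := intervalIntegral.continuousOn_primitive_interval' (hPi k) left_mem_uIcc
    rw [uIcc_of_le zero_le_one] at this
    exact continuousOn_const.add (this.mono Ioo_subset_Icc_self)
  set b : ℝ → Vec N := fun s k =>
    (S.E - S.V (γ s))⁻¹ * ∑ j, B j s * (S.g (γ s))⁻¹ j k with hb
  have hne : ∀ s ∈ Ioo (0:ℝ) 1, S.E - S.V (γ s) ≠ 0 := fun s hs => (sub_pos.2 (hwell s hs)).ne'
  have hbc : ContinuousOn b (Ioo 0 1) := by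
    refine continuousOn_pi.2 fun k => ContinuousOn.mul ?_
      (continuousOn_finsetSum _ fun j _ => (hBc j).mul
        ((S.contDiffOn_g_inv j k).continuousOn.comp hγc hU))
    exact (continuousOn_const.sub (S.hVC.continuousOn.comp hγc hU)).inv₀ hne
  have hae : ∀ᵐ s ∂volume.restrict (Ioo (0:ℝ) 1), deriv γ s = b s := by
    filter_upwards [ae_all_iff.2 hc, ae_restrict_mem measurableSet_Ioo] with s hs hsI
    funext k
    rw [S.eq_sum_prod_single (hU hsI) (deriv γ s) k]
    simp only [hb, hB, ← hs, Finset.mul_sum]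
    refine Finset.sum_congr rfl fun j _ => ?_
    field_simp [hne s hsI]
  have hder : ∀ s ∈ Ioo (0:ℝ) 1, HasDerivAt γ (b s) s := fun s hs =>
    hγ.1.hasDerivAt_of_ae_eq hbc hae hs
  have hdc : ContinuousOn (deriv γ) (Ioo 0 1) := hbc.congr fun s hs => (hder s hs).deriv
  have hγd : DifferentiableOn ℝ γ (Ioo 0 1) := fun s hs =>
    (hder s hs).differentiableAt.differentiableWithinAt
  have hγ1 : ContDiffOn ℝ 1 γ (Ioo 0 1) := by
    refine (contDiffOn_succ_iff_deriv_of_isOpen (n := 0) isOpen_Ioo).2 ⟨hγd, by simp, ?_⟩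
    exact contDiffOn_zero.2 hdc
  have hPc : ∀ k, ContinuousOn (fun u => S.jacDeriv (γ u) (deriv γ u) (Pi.single k 1) 0)
      (Ioo 0 1) := fun k =>
    S.continuousOn_jacDeriv.comp (f := fun u => (γ u, deriv γ u, (Pi.single k 1 : Vec N), 0))
      (hγc.prodMk (hdc.prodMk continuousOn_const)) fun s hs => ⟨hU hs, mem_univ _⟩
  have hB1 : ∀ k, ContDiffOn ℝ 1 (B k) (Ioo 0 1) := by
    intro k
    have hBd : ∀ s ∈ Ioo (0:ℝ) 1,
        HasDerivAt (B k) (S.jacDeriv (γ s) (deriv γ s) (Pi.single k 1) 0) s := fun s hs =>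
      (intervalIntegral.integral_hasDerivAt_right
        ((hPi k).mono_set (by
          rw [uIcc_of_le zero_le_one, uIcc_of_le hs.1.le]
          exact Icc_subset_Icc_right hs.2.le))
        ((hPc k).stronglyMeasurableAtFilter isOpen_Ioo s hs)
        ((hPc k).continuousAt (isOpen_Ioo.mem_nhds hs))).const_add _
    refine (contDiffOn_succ_iff_deriv_of_isOpen (n := 0) isOpen_Ioo).2
      ⟨fun s hs => (hBd s hs).differentiableAt.differentiableWithinAt, by simp, ?_⟩
    exact contDiffOn_zero.2 ((hPc k).congr fun s hs => (hBd s hs).deriv)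
  have hb1 : ContDiffOn ℝ 1 b (Ioo 0 1) := by
    refine contDiffOn_pi.2 fun k => ContDiffOn.mul ?_ (ContDiffOn.sum fun j _ => (hB1 j).mul
      (((S.contDiffOn_g_inv j k).of_le (by norm_num)).comp hγ1 hU))
    exact (contDiffOn_const.sub ((S.hVC.of_le (by norm_num)).comp hγ1 hU)).inv hne
  have h2 : ContDiffOn ℝ (1 + 1) γ (Ioo 0 1) :=
    (contDiffOn_succ_iff_deriv_of_isOpen isOpen_Ioo).2
      ⟨hγd, by simp, hb1.congr fun s hs => (hder s hs).deriv⟩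
  exact h2.of_le (by norm_num [one_add_one_eq_two])

end Setting

namespace Setting

variable (S : Setting N)

lemma prod_eq_dotProduct (x v w : Vec N) : S.prod x v w = v ⬝ᵥ (S.g x *ᵥ w) := by
  simp only [prod, gP, dotProduct, mulVec, Finset.mul_sum]
  exact Finset.sum_congr rfl fun i _ => Finset.sum_congr rfl fun j _ => by ring

lemma prod_grad {x : Vec N} (hx : x ∈ S.U) (y : Vec N) :
    S.prod x (S.grad x) y = fderiv ℝ S.V x y := by
  rw [S.prod_comm hx, prod_eq_dotProduct, grad, mulVec_mulVec,
    Matrix.mul_nonsing_inv _ (isUnit_iff_ne_zero.2 (S.det_g_ne_zero hx)), one_mulVec,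
    S.fderiv_apply_eq]
  rfl

lemma sum_g_mul_christoffel {x : Vec N} (hx : x ∈ S.U) (a i j : Fin N) :
    ∑ b, S.g x a b * S.christoffel x b i j = (1/2) *
      (fderiv ℝ (fun y => S.g y a j) x (Pi.single i 1)
        + fderiv ℝ (fun y => S.g y a i) x (Pi.single j 1)
        - fderiv ℝ (fun y => S.g y i j) x (Pi.single a 1)) := by
  set F : Vec N := fun l => fderiv ℝ (fun y => S.g y l j) x (Pi.single i 1)
    + fderiv ℝ (fun y => S.g y l i) x (Pi.single j 1)
    - fderiv ℝ (fun y => S.g y i j) x (Pi.single l 1) with hF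
  have h : S.g x *ᵥ ((S.g x)⁻¹ *ᵥ F) = F := by
    rw [mulVec_mulVec, Matrix.mul_nonsing_inv _ (isUnit_iff_ne_zero.2 (S.det_g_ne_zero hx)),
      one_mulVec]
  have h2 := congrFun h a
  change _ = 1/2 * F a
  rw [← h2]
  simp only [mulVec, dotProduct, christoffel, Finset.mul_sum, hF]
  exact Finset.sum_congr rfl fun b _ => Finset.sum_congr rfl fun l _ => by ring

lemma prod_christoffel {x : Vec N} (hx : x ∈ S.U) (v y : Vec N) :
    S.prod x v (fun k => ∑ i, ∑ j, S.christoffel x k i j * v i * y j)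
      = (1/2) * ∑ i, ∑ j, fderiv ℝ (fun z => S.g z i j) x y * v i * v j := by
  have h1 : S.prod x v (fun k => ∑ i, ∑ j, S.christoffel x k i j * v i * y j)
      = ∑ a, ∑ i, ∑ j, v a * v i * y j * ∑ b, S.g x a b * S.christoffel x b i j := by
    simp only [prod, gP, Finset.mul_sum]
    refine Finset.sum_congr rfl fun a _ => ?_
    rw [Finset.sum_comm]
    refine Finset.sum_congr rfl fun i _ => ?_
    rw [Finset.sum_comm]
    exact Finset.sum_congr rfl fun j _ => Finset.sum_congr rfl fun b _ => by ring
  have h2 : ∀ a i j, v a * v i * y j * ∑ b, S.g x a b * S.christoffel x b i j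
      = 1/2 * (v a * v i * y j * fderiv ℝ (fun z => S.g z a j) x (Pi.single i 1))
        + 1/2 * (y j * fderiv ℝ (fun z => S.g z a i) x (Pi.single j 1) * v a * v i)
        - 1/2 * (v i * v a * y j * fderiv ℝ (fun z => S.g z i j) x (Pi.single a 1)) := by
    intro a i j
    rw [S.sum_g_mul_christoffel hx]
    ring
  simp only [h1, h2, Finset.sum_sub_distrib, Finset.sum_add_distrib]
  rw [Finset.sum_comm (f := fun a i => ∑ j, 1/2 *
    (v i * v a * y j * fderiv ℝ (fun z => S.g z i j) x (Pi.single a 1))), add_sub_cancel_left]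
  simp only [Finset.mul_sum]
  refine Finset.sum_congr rfl fun a _ => Finset.sum_congr rfl fun i _ => ?_
  rw [fderiv_apply_eq_sum x y, Finset.sum_mul, Finset.sum_mul, Finset.mul_sum]

lemma jacDeriv_eq {x : Vec N} (hx : x ∈ S.U) (v y w : Vec N) :
    (S.E - S.V x) * S.prod x v (fun k => w k + ∑ i, ∑ j, S.christoffel x k i j * v i * y j)
      - (1/2) * S.prod x v v * S.prod x (S.grad x) y = S.jacDeriv x v y w := by
  have h := S.prod_add_right x v w (fun k => ∑ i, ∑ j, S.christoffel x k i j * v i * y j)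
  rw [S.prod_christoffel hx] at h
  rw [S.prod_grad hx, jacDeriv]
  change (S.E - S.V x) * S.prod x v (w + fun k => ∑ i, ∑ j, S.christoffel x k i j * v i * y j)
    - _ = _
  rw [h]
  ring

end Setting

/-- **Lemma 3.1**: the infimum `d_V(Q)` is attained by a curve `γ_Q ∈ X_Q` which has
constant `(E−V(γ_Q))g(γ̇_Q,γ̇_Q)`, stays in the well on `(0,1]`, is `C²` on `(0,1)`,
and satisfies the weak geodesic equation (2.7) on `[0,1]`. -/
theorem minimizer_exists {N : ℕ} (S : Setting N) (Q : Vec N) (hQ : S.V Q < S.E) :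
    ∃ γ : ℝ → Vec N,
      S.InXQ Q γ ∧
      S.LV γ = S.dV Q ∧
      (∀ x, S.InXQ Q x → S.LV γ ≤ S.LV x) ∧
      (∃ c : ℝ, ∀ s ∈ Ioo (0:ℝ) 1,
        (S.E - S.V (γ s)) * S.prod (γ s) (deriv γ s) (deriv γ s) = c) ∧
      ContDiffOn ℝ 2 γ (Ioo 0 1) ∧
      S.WeakGeo γ 0 1 := by
  obtain ⟨γ, hγ, hd, hjac⟩ := S.exists_inXQ_jac_le hQ
  have hae := hγ.jac_eq_ae hQ hjac
  have hLV : S.LV γ = S.dV Q := by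
    have h : S.LV γ = ∫ _ in (0:ℝ)..1, S.dV Q := by
      refine intervalIntegral.integral_congr_ae ?_
      have h1 : ∀ᵐ s : ℝ, s ≠ 1 := by simp [ae_iff]
      filter_upwards [(ae_restrict_iff' measurableSet_Ioo).1 hae, h1] with s hs hs1 hsI
      rw [uIoc_of_le zero_le_one] at hsI
      have h2 := hs ⟨hsI.1, lt_of_le_of_ne hsI.2 hs1⟩
      rw [Setting.jac] at h2
      rw [h2, Real.sqrt_sq (Setting.dV_pos hQ).le]
    simpa using h
  choose c hc using hγ.euler_lagrange_ae hQ hd hjac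
  have hC2 := hγ.contDiffOn_of_euler_lagrange hc
  refine ⟨γ, hγ, hLV, fun x hx => hLV.le.trans hx.dV_le, ⟨2 * S.dV Q ^ 2, ?_⟩, hC2, ?_⟩
  · have hγc := hC2.continuousOn
    have hdc := hC2.continuousOn_deriv_of_isOpen isOpen_Ioo (by norm_num)
    have hcont : ContinuousOn (fun s => S.jac (γ s) (deriv γ s)) (Ioo 0 1) :=
      S.continuousOn_jac.comp (f := fun s => (γ s, deriv γ s)) (hγc.prodMk hdc) fun s hs =>
        ⟨S.mem_U (hγ.le (Ioo_subset_Icc_self hs)), mem_univ _⟩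
    have heq := Measure.eqOn_open_of_ae_eq (μ := volume) hae isOpen_Ioo hcont continuousOn_const
    intro s hs
    have h := heq hs
    simp only [Setting.jac] at h
    linarith
  · intro ξ hξ hsξ
    have h := (hγ.first_variation hQ hd hjac (hξ.of_le (by exact_mod_cast le_top)) hsξ).2
    refine (intervalIntegral.integral_congr fun s hs => ?_).trans h
    rw [uIcc_of_le zero_le_one] at hs
    exact S.jacDeriv_eq (S.mem_U (hγ.le hs)) _ _ _

end
end JacobiPaper
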